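/- arXiv:2409.19160 — 2 statements merged into one kernel-verified Lean document; each statement's English description precedes it below -/
import Mathlib

section
/- (Jump relation for the clamped-plate layer potential K₁, biharmonic part.) Let σ : ℝ → ℝ be infinitely differentiable with σ(s+L) = σ(s) for all s, and fix t ∈ ℝ. Define K₁(x, γ(s)) = G^B_{n_y n_y n_y}(x, γ(s)) + 3·G^B_{n_y τ_y τ_y}(x, γ(s)), where with r = x − γ(s): G^B_{n_y n_y n_y}(x, γ(s)) = −(3/(4π))(r·n(s))/‖r‖² + (1/(2π))(r·n(s))³/‖r‖⁴ and G^B_{n_y τ_y τ_y}(x, γ(s)) = (1/(2π))(r·n(s))(r·τ(s))²/‖r‖⁴ − (1/(4π))(r·n(s))/‖r‖². Then there is h₀ > 0 such that for 0 < |h| < h₀ the point γ(t) + h·n(t) does not lie on the curve, the function s ↦ K₁(γ(t), γ(s))·σ(s) (defined for s not congruent to t mod L) is bounded on [0, L] with Lebesgue integral I := ∫₀^L K₁(γ(t), γ(s))σ(s) ds, and lim_{h→0⁺} ∫₀^L K₁(γ(t)+h·n(t), γ(s))σ(s) ds = −(1/2)σ(t) + I, while lim_{h→0⁻} ∫₀^L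 K₁(γ(t)+h·n(t), γ(s))σ(s) ds = (1/2)σ(t) + I. -/
open Real Filter Topology MeasureTheory

noncomputable section

/-- Euclidean dot product on `ℝ × ℝ`. -/
def dot2 (v w : ℝ × ℝ) : ℝ := v.1 * w.1 + v.2 * w.2

/-- Unit tangent vector `τ(s) = γ′(s)`. -/
def tang (γ : ℝ → ℝ × ℝ) (s : ℝ) : ℝ × ℝ := deriv γ s

/-- Unit normal vector `n(s) = (τ₂(s), −τ₁(s))`. -/
def nor (γ : ℝ → ℝ × ℝ) (s : ℝ) : ℝ × ℝ := ((deriv γ s).2, -(deriv γ s).1)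

/-- Signed curvature `κ(s) = −γ″(s)·n(s)`. -/
def curv (γ : ℝ → ℝ × ℝ) (s : ℝ) : ℝ := -(dot2 (deriv (deriv γ) s) (nor γ s))

/-- The clamped-plate kernel
`K₁(x, γ(s)) = G^B_{n_y n_y n_y}(x, γ(s)) + 3 G^B_{n_y τ_y τ_y}(x, γ(s))`,
given by its explicit formula, with `r = x − γ(s)`. -/
def K1clamped (γ : ℝ → ℝ × ℝ) (x : ℝ × ℝ) (s : ℝ) : ℝ :=
  (-(3 / (4 * π)) * dot2 (x - γ s) (nor γ s) / dot2 (x - γ s) (x - γ s)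
      + 1 / (2 * π) * (dot2 (x - γ s) (nor γ s)) ^ 3 / (dot2 (x - γ s) (x - γ s)) ^ 2)
    + 3 *
      (1 / (2 * π) * dot2 (x - γ s) (nor γ s) * (dot2 (x - γ s) (tang γ s)) ^ 2
          / (dot2 (x - γ s) (x - γ s)) ^ 2
        - 1 / (4 * π) * dot2 (x - γ s) (nor γ s) / dot2 (x - γ s) (x - γ s))

/-!
Write `r = x - γ(s)`. On a unit-speed curve, Pythagoras in the frame `(n(s), τ(s))` collapses `K₁`
to `-(1/π) (r·n)³ / ‖r‖⁴`, which is homogeneous of degree `-1` in `r`. For `x = γ(t) + h n(t)` and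
`s = t + u`, Taylor's formula gives `|r·n| ≤ |h| + O(u²)` and the chord-arc property gives
`‖r‖² ≥ m (h² + u²)`, so the kernel is dominated by a constant plus a Poisson kernel,
`C (1 + |h| / (h² + u²))`.

Split the integral at `|u| = √|h|`. Outside, the Poisson kernel is at most `1`, and dominated
convergence yields the integral of the kernel on the curve. Inside, substitute `u = h v`: the
integrand converges, dominated by a multiple of `1 / (1 + v²)`, to `-(1/π) σ(t) / (1 + v²)²`, and
`∫ dv / (1 + v²)² = π/2` produces the jump `-σ(t)/2`. For `h < 0` the substitution reverses the
orientation, hence the sign.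
-/

/-! ### Singular limits of families with a Poisson-type bound -/

theorem tendsto_div_one_add_sq_cobounded :
    Tendsto (fun v : ℝ => v / (1 + v ^ 2)) (Bornology.cobounded ℝ) (𝓝 0) := by
  refine squeeze_zero_norm (fun v => ?_) (tendsto_zero_iff_norm_tendsto_zero.1
    (tendsto_inv₀_cobounded (α := ℝ)))
  rcases eq_or_ne v 0 with rfl | hv
  · simp
  · rw [norm_div, norm_inv, inv_eq_one_div, norm_of_nonneg (by positivity : 0 ≤ 1 + v ^ 2),
      div_le_div_iff₀ (by positivity) (norm_pos_iff.2 hv), ← sq, norm_eq_abs, sq_abs]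
    linarith

theorem integral_inv_one_add_sq_sq : ∫ v : ℝ, ((1 + v ^ 2) ^ 2)⁻¹ = π / 2 := by
  have hderiv (v : ℝ) : HasDerivAt (fun v => (v / (1 + v ^ 2) + arctan v) / 2)
      ((1 + v ^ 2) ^ 2)⁻¹ v := by
    have hsq : HasDerivAt (fun v : ℝ => 1 + v ^ 2) (2 * v) v := by
      simpa using (hasDerivAt_pow 2 v).const_add 1
    refine ((((hasDerivAt_id v).div hsq (by positivity)).add
      (hasDerivAt_arctan v)).div_const 2).congr_deriv ?_
    simp only [id_eq]
    field_simp
    ring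
  have hint : Integrable fun v : ℝ => ((1 + v ^ 2) ^ 2)⁻¹ := by
    refine integrable_inv_one_add_sq.mono'
      (Measurable.aestronglyMeasurable (by fun_prop)) (.of_forall fun v => ?_)
    rw [norm_of_nonneg (by positivity)]
    gcongr
    exact le_self_pow₀ (by linarith [sq_nonneg v]) two_ne_zero
  have hlim := tendsto_div_one_add_sq_cobounded
  rw [IsOrderBornology.cobounded_eq, tendsto_sup] at hlim
  rw [integral_of_hasDerivAt_of_tendsto hderiv hint
    ((hlim.1.add (tendsto_arctan_atBot.mono_right nhdsWithin_le_nhds)).div_const 2)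
    ((hlim.2.add (tendsto_arctan_atTop.mono_right nhdsWithin_le_nhds)).div_const 2)]
  ring

theorem integral_neg_one_div_pi_mul_inv_one_add_sq_sq_mul (c : ℝ) :
    ∫ v : ℝ, -(1 / π) * ((1 + v ^ 2) ^ 2)⁻¹ * c = -(1 / 2) * c := by
  rw [integral_mul_const, integral_const_mul, integral_inv_one_add_sq_sq]
  field_simp

theorem mul_one_add_poisson_le {h v : ℝ} (hh : 0 < h) (h1 : √h < 1) (hv : h * v ^ 2 ≤ 1) :
    h * (1 + h / (h ^ 2 + (h * v) ^ 2)) ≤ 3 * (1 + v ^ 2)⁻¹ := by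
  have hexpand : h * (1 + h / (h ^ 2 + (h * v) ^ 2)) = h + (1 + v ^ 2)⁻¹ := by
    field_simp
  have hle : h ≤ 2 * (1 + v ^ 2)⁻¹ := by
    have : h < 1 := by simpa using (sqrt_lt' one_pos).1 h1
    rw [← div_eq_mul_inv, le_div_iff₀ (by positivity)]
    linarith
  linarith

theorem one_add_poisson_le_two {h u : ℝ} (hh : 0 < h) (hu : h ≤ u ^ 2) :
    1 + h / (h ^ 2 + u ^ 2) ≤ 2 := by
  have : h / (h ^ 2 + u ^ 2) ≤ 1 := div_le_one_of_le₀ (by nlinarith) (by positivity)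
  linarith

theorem eventually_sqrt_lt_nhdsGT_zero {R : ℝ} (hR : 0 < R) : ∀ᶠ h in 𝓝[>] (0 : ℝ), √h < R :=
  nhdsWithin_le_nhds
    (continuous_sqrt.continuousAt.eventually_lt continuousAt_const (by simpa using hR))

section PoissonBound

variable {E : Type*} [NormedAddCommGroup E] [NormedSpace ℝ E] {f : ℝ → ℝ → E} {f₀ g : ℝ → E}
  {R C : ℝ}

theorem setIntegral_smul_comp_mul_sqrt_inv {h : ℝ} (hh : 0 < h) (f : ℝ → E) :
    ∫ v in Set.Ioc (-(√h)⁻¹) (√h)⁻¹, h • f (h * v) = ∫ u in (-√h)..√h, f u := by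
  have hmul : h * (√h)⁻¹ = √h := by rw [← div_eq_mul_inv, div_sqrt]
  rw [← intervalIntegral.integral_of_le (neg_le_self (by positivity)),
    intervalIntegral.integral_smul, intervalIntegral.smul_integral_comp_mul_left, mul_neg, hmul]

theorem norm_indicator_smul_comp_mul_le {f : ℝ → E} {h : ℝ} (hC : 0 ≤ C) (hh : 0 < h)
    (hhR : √h < R) (h1 : √h < 1)
    (hbound : ∀ u, |u| ≤ R → ‖f u‖ ≤ C * (1 + h / (h ^ 2 + u ^ 2))) (v : ℝ) :
    ‖(Set.Ioc (-(√h)⁻¹) (√h)⁻¹).indicator (fun v => h • f (h * v)) v‖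
      ≤ 3 * C * (1 + v ^ 2)⁻¹ := by
  rw [norm_indicator_eq_indicator_norm]
  refine Set.indicator_apply_le' (fun hv => ?_) fun _ => by positivity
  have hv' : √h * |v| ≤ 1 := by
    rw [← le_inv_mul_iff₀ (by positivity), mul_one]
    exact abs_le.2 ⟨hv.1.le, hv.2⟩
  have hhv : |h * v| = √h * (√h * |v|) := by
    rw [← mul_assoc, mul_self_sqrt hh.le, abs_mul, abs_of_pos hh]
  have hhv2 : h * v ^ 2 ≤ 1 := by
    calc h * v ^ 2 = (√h * |v|) ^ 2 := by rw [mul_pow, sq_sqrt hh.le, sq_abs]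
      _ ≤ 1 := pow_le_one₀ (by positivity) hv'
  calc ‖h • f (h * v)‖ = h * ‖f (h * v)‖ := norm_smul_of_nonneg hh.le _
    _ ≤ h * (C * (1 + h / (h ^ 2 + (h * v) ^ 2))) := by
      gcongr
      exact hbound _ (hhv.trans_le ((mul_le_of_le_one_right (sqrt_nonneg h) hv').trans hhR.le))
    _ = C * (h * (1 + h / (h ^ 2 + (h * v) ^ 2))) := by ring
    _ ≤ C * (3 * (1 + v ^ 2)⁻¹) :=
      mul_le_mul_of_nonneg_left (mul_one_add_poisson_le hh h1 hhv2) hC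
    _ = 3 * C * (1 + v ^ 2)⁻¹ := by ring

theorem tendsto_integral_near_of_poisson_bound (hR : 0 < R) (hC : 0 ≤ C)
    (hf : ∀ h, StronglyMeasurable (f h))
    (hbound : ∀ᶠ h in 𝓝[>] 0, ∀ u, |u| ≤ R → ‖f h u‖ ≤ C * (1 + h / (h ^ 2 + u ^ 2)))
    (hscale : ∀ v, Tendsto (fun h => h • f h (h * v)) (𝓝[>] 0) (𝓝 (g v))) :
    Tendsto (fun h => ∫ u in (-√h)..√h, f h u) (𝓝[>] 0) (𝓝 (∫ v, g v)) := by
  have hrescale : ∀ᶠ h in 𝓝[>] (0 : ℝ),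
      ∫ v, (Set.Ioc (-(√h)⁻¹) (√h)⁻¹).indicator (fun v => h • f h (h * v)) v
        = ∫ u in (-√h)..√h, f h u := by
    filter_upwards [self_mem_nhdsWithin] with h (hh : 0 < h)
    rw [integral_indicator measurableSet_Ioc, setIntegral_smul_comp_mul_sqrt_inv hh]
  refine (tendsto_integral_filter_of_dominated_convergence (fun v => 3 * C * (1 + v ^ 2)⁻¹)
    (.of_forall fun h => ?_) ?_ (integrable_inv_one_add_sq.const_mul _)
    (.of_forall fun v => ?_)).congr' hrescale
  · exact (((hf h).comp_measurable (measurable_const_mul h)).const_smul h).indicator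
      measurableSet_Ioc |>.aestronglyMeasurable
  · filter_upwards [hbound, eventually_sqrt_lt_nhdsGT_zero hR,
      eventually_sqrt_lt_nhdsGT_zero one_pos, self_mem_nhdsWithin] with h hb hhR h1 (hh : 0 < h)
    exact .of_forall (norm_indicator_smul_comp_mul_le hC hh hhR h1 hb)
  · have hmem : ∀ᶠ h in 𝓝[>] (0 : ℝ), v ∈ Set.Ioc (-(√h)⁻¹) (√h)⁻¹ := by
      filter_upwards [eventually_sqrt_lt_nhdsGT_zero (R := (|v| + 1)⁻¹) (by positivity),
        self_mem_nhdsWithin] with h hhv (hh : 0 < h)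
      have : |v| + 1 < (√h)⁻¹ := (lt_inv_comm₀ (by positivity) (by positivity)).1 hhv
      exact Set.Ioo_subset_Ioc_self (abs_lt.1 (by linarith))
    refine (hscale v).congr' ?_
    filter_upwards [hmem] with h hv
    rw [Set.indicator_of_mem hv]

theorem tendsto_integral_far_of_poisson_bound (hC : 0 ≤ C)
    (hf : ∀ h, StronglyMeasurable (f h))
    (hbound : ∀ᶠ h in 𝓝[>] 0, ∀ u, |u| ≤ R → ‖f h u‖ ≤ C * (1 + h / (h ^ 2 + u ^ 2)))
    (hlim : ∀ u, u ≠ 0 → |u| ≤ R → Tendsto (fun h => f h u) (𝓝[>] 0) (𝓝 (f₀ u))) :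
    Tendsto (fun h => ∫ u in Set.Ioc (-R) R \ Set.Ioc (-√h) √h, f h u) (𝓝[>] 0)
      (𝓝 (∫ u in Set.Ioc (-R) R, f₀ u)) := by
  simp_rw [Set.sdiff_eq, ← setIntegral_indicator measurableSet_Ioc.compl]
  refine tendsto_integral_filter_of_dominated_convergence (fun _ => 2 * C)
    (.of_forall fun h => ?_) ?_ (integrable_const _) ?_
  · exact ((hf h).indicator measurableSet_Ioc.compl).aestronglyMeasurable
  · filter_upwards [hbound, self_mem_nhdsWithin] with h hb (hh : 0 < h)
    filter_upwards [ae_restrict_mem measurableSet_Ioc] with u hu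
    have hu' : |u| ≤ R := abs_le.2 ⟨hu.1.le, hu.2⟩
    rw [norm_indicator_eq_indicator_norm]
    refine Set.indicator_apply_le' (fun huS => ?_) fun _ => by positivity
    have hhu : h ≤ u ^ 2 := by
      rw [← sq_abs, ← sqrt_le_left (abs_nonneg u)]
      by_contra! hlt
      exact huS (Set.Ioo_subset_Ioc_self (abs_lt.1 hlt))
    calc ‖f h u‖ ≤ C * (1 + h / (h ^ 2 + u ^ 2)) := hb u hu'
      _ ≤ C * 2 := by gcongr; exact one_add_poisson_le_two hh hhu
      _ = 2 * C := mul_comm _ _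
  · have hne : ∀ᵐ u : ℝ, u ≠ 0 := Measure.ae_ne volume 0
    filter_upwards [ae_restrict_mem measurableSet_Ioc, ae_restrict_of_ae hne] with u hu hu0
    refine (hlim u hu0 (abs_le.2 ⟨hu.1.le, hu.2⟩)).congr' ?_
    filter_upwards [eventually_sqrt_lt_nhdsGT_zero (abs_pos.2 hu0)] with h hhu
    refine (Set.indicator_of_mem (fun huS => ?_) _).symm
    exact hhu.not_ge (abs_le.2 ⟨huS.1.le, huS.2⟩)

theorem tendsto_integral_of_poisson_bound_right (hR : 0 < R) (hC : 0 ≤ C)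
    (hf : ∀ h, StronglyMeasurable (f h))
    (hbound : ∀ᶠ h in 𝓝[>] 0, ∀ u, |u| ≤ R → ‖f h u‖ ≤ C * (1 + h / (h ^ 2 + u ^ 2)))
    (hscale : ∀ v, Tendsto (fun h => h • f h (h * v)) (𝓝[>] 0) (𝓝 (g v)))
    (hlim : ∀ u, u ≠ 0 → |u| ≤ R → Tendsto (fun h => f h u) (𝓝[>] 0) (𝓝 (f₀ u))) :
    Tendsto (fun h => ∫ u in (-R)..R, f h u) (𝓝[>] 0)
      (𝓝 ((∫ v, g v) + ∫ u in (-R)..R, f₀ u)) := by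
  rw [intervalIntegral.integral_of_le (neg_le_self hR.le)]
  refine ((tendsto_integral_near_of_poisson_bound hR hC hf hbound hscale).add
    (tendsto_integral_far_of_poisson_bound hC hf hbound hlim)).congr' ?_
  filter_upwards [hbound, eventually_sqrt_lt_nhdsGT_zero hR, self_mem_nhdsWithin]
    with h hb hhR (hh : 0 < h)
  have hint : IntegrableOn (f h) (Set.Ioc (-R) R) := by
    refine Measure.integrableOn_of_bounded (M := C * (1 + h / h ^ 2)) measure_Ioc_lt_top.ne
      (hf h).aestronglyMeasurable ?_
    filter_upwards [ae_restrict_mem measurableSet_Ioc] with u hu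
    refine (hb u (abs_le.2 ⟨hu.1.le, hu.2⟩)).trans ?_
    gcongr
    exact le_add_of_nonneg_right (sq_nonneg u)
  have hsub : Set.Ioc (-√h) √h ⊆ Set.Ioc (-R) R := Set.Ioc_subset_Ioc (neg_le_neg hhR.le) hhR.le
  rw [intervalIntegral.integral_of_le (neg_le_self (sqrt_nonneg h)),
    intervalIntegral.integral_of_le (neg_le_self hR.le),
    setIntegral_sdiff measurableSet_Ioc hint hsub, add_sub_cancel]

theorem tendsto_integral_of_poisson_bound_left (hR : 0 < R) (hC : 0 ≤ C)
    (hf : ∀ h, StronglyMeasurable (f h))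
    (hbound : ∀ᶠ h in 𝓝[<] 0, ∀ u, |u| ≤ R → ‖f h u‖ ≤ C * (1 + |h| / (h ^ 2 + u ^ 2)))
    (hscale : ∀ v, Tendsto (fun h => h • f h (h * v)) (𝓝[<] 0) (𝓝 (g v)))
    (hlim : ∀ u, u ≠ 0 → |u| ≤ R → Tendsto (fun h => f h u) (𝓝[<] 0) (𝓝 (f₀ u))) :
    Tendsto (fun h => ∫ u in (-R)..R, f h u) (𝓝[<] 0)
      (𝓝 (-(∫ v, g v) + ∫ u in (-R)..R, f₀ u)) := by
  have hneg : Tendsto (fun h : ℝ => -h) (𝓝[>] 0) (𝓝[<] 0) := by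
    simpa using tendsto_neg_nhdsGT (a := (0 : ℝ))
  have hneg' : Tendsto (fun h : ℝ => -h) (𝓝[<] 0) (𝓝[>] 0) := by
    simpa using tendsto_neg_nhdsLT (a := (0 : ℝ))
  have hreflect := tendsto_integral_of_poisson_bound_right (f := fun h => f (-h)) (f₀ := f₀)
    (g := fun v => -g (-v)) (C := C) hR hC (fun h => hf (-h)) ?_ (fun v => ?_)
    fun u hu0 huR => (hlim u hu0 huR).comp hneg
  · rw [integral_neg, integral_neg_eq_self] at hreflect
    simpa [Function.comp_def] using hreflect.comp hneg'
  · filter_upwards [hneg.eventually hbound, self_mem_nhdsWithin] with h hb (hh : 0 < h) u hu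
    simpa [abs_of_pos hh] using hb u hu
  · simpa [Function.comp_def] using ((hscale (-v)).comp hneg).neg

end PoissonBound

/-! ### Periodic functions and curves -/

section Periodic

variable {α : Type*} {F : ℝ → α} {L : ℝ}

theorem exists_abs_le_half_of_periodic (hF : Function.Periodic F L) (hL : 0 < L) (t s : ℝ) :
    ∃ u, |u| ≤ L / 2 ∧ F (t + u) = F s := by
  obtain ⟨y, hy, hFy⟩ := hF.exists_mem_Ico hL s (t - L / 2)
  refine ⟨y - t, abs_le.2 ⟨by linarith [hy.1], by linarith [hy.2]⟩, ?_⟩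
  rw [add_sub_cancel, hFy]

theorem eq_of_periodic_of_injOn_Ico (hF : Function.Periodic F L) (hL : 0 < L)
    (hinj : Set.InjOn F (Set.Ico 0 L)) {s t : ℝ} (hst : |s - t| < L) (h : F s = F t) : s = t := by
  have hmod (x : ℝ) : F (toIcoMod hL 0 x) = F x := hF.sub_zsmul_eq _
  have hmem (x : ℝ) : toIcoMod hL 0 x ∈ Set.Ico 0 L := by simpa using toIcoMod_mem_Ico hL 0 x
  have hcong : s ≡ t [PMOD L] := by
    rw [← toIcoMod_inj hL (c := 0)]
    exact hinj (hmem s) (hmem t) (by rw [hmod, hmod, h])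
  obtain ⟨n, hn⟩ := AddCommGroup.modEq_iff_eq_add_zsmul.1 hcong
  have hn0 : n = 0 := by
    have : |(n : ℝ)| * L < 1 * L := by
      rw [hn, sub_add_cancel_left, abs_neg, zsmul_eq_mul, abs_mul, abs_of_pos hL] at hst
      simpa using hst
    exact Int.abs_lt_one_iff.1 (by exact_mod_cast lt_of_mul_lt_mul_right this hL.le)
  simpa [hn0] using hn.symm

theorem integral_eq_integral_centered_of_periodic {E : Type*} [NormedAddCommGroup E]
    [NormedSpace ℝ E] {F : ℝ → E} (hF : Function.Periodic F L) (t : ℝ) :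
    ∫ s in (0 : ℝ)..L, F s = ∫ u in (-(L / 2))..(L / 2), F (t + u) := by
  have hshift := hF.intervalIntegral_add_eq 0 (t + -(L / 2))
  rw [zero_add, show t + -(L / 2) + L = t + L / 2 by ring] at hshift
  rw [hshift, intervalIntegral.integral_comp_add_left]

theorem exists_norm_le_of_periodic {E : Type*} [SeminormedAddCommGroup E] {F : ℝ → E}
    (hF : Function.Periodic F L) (hL : L ≠ 0) (hcont : Continuous F) : ∃ C, ∀ s, ‖F s‖ ≤ C := by
  obtain ⟨C, hC⟩ := (hF.isBounded_of_continuous hL hcont).exists_norm_le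
  exact ⟨C, fun s => hC _ ⟨s, rfl⟩⟩

theorem periodic_deriv {E : Type*} [NormedAddCommGroup E] [NormedSpace ℝ E] {F : ℝ → E}
    (hF : Function.Periodic F L) : Function.Periodic (deriv F) L := fun s => by
  rw [← deriv_comp_add_const, funext hF]

theorem exists_lipschitzWith_deriv_of_periodic {E : Type*} [NormedAddCommGroup E] [NormedSpace ℝ E]
    {F : ℝ → E} (hF : Function.Periodic F L) (hL : L ≠ 0) (hF2 : ContDiff ℝ 2 F) :
    ∃ K, LipschitzWith K (deriv F) := by
  have hderiv : ContDiff ℝ 1 (deriv F) := hF2.deriv'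
  obtain ⟨C, hC⟩ := exists_norm_le_of_periodic (periodic_deriv (periodic_deriv hF)) hL
    (hderiv.continuous_deriv le_rfl)
  exact ⟨C.toNNReal, lipschitzWith_of_nnnorm_deriv_le (hderiv.differentiable one_ne_zero)
    fun s => NNReal.le_toNNReal_of_coe_le (hC s)⟩

end Periodic

section Chords

variable {E : Type*} [NormedAddCommGroup E] [NormedSpace ℝ E] {f : ℝ → E}

theorem norm_sub_sub_smul_deriv_le_of_lipschitzWith {K : NNReal} (hf : Differentiable ℝ f)
    (hK : LipschitzWith K (deriv f)) (s x : ℝ) :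
    ‖f x - f s - (x - s) • deriv f s‖ ≤ K * (x - s) ^ 2 := by
  have hbound : ∀ y ∈ Metric.closedBall s |x - s|,
      ‖fderiv ℝ f y - ContinuousLinearMap.toSpanSingleton ℝ (deriv f s)‖ ≤ K * |x - s| := by
    intro y hy
    have hsub : fderiv ℝ f y - ContinuousLinearMap.toSpanSingleton ℝ (deriv f s)
        = ContinuousLinearMap.toSpanSingleton ℝ (deriv f y - deriv f s) := by
      ext
      simp
    rw [hsub, ContinuousLinearMap.norm_toSpanSingleton, ← dist_eq_norm]
    exact (hK.dist_le_mul y s).trans (by gcongr; exact hy)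
  have := (convex_closedBall s |x - s|).norm_image_sub_le_of_norm_fderiv_le' (fun y _ => hf y)
    hbound (Metric.mem_closedBall_self (abs_nonneg _)) (Metric.mem_closedBall.2 le_rfl)
  simpa [mul_assoc, ← sq] using this

theorem exists_pos_mul_abs_sub_le_norm_sub {S : Set ℝ} (hS : IsCompact S) {t : ℝ}
    (hf : ContinuousOn f S) (hdiff : DifferentiableAt ℝ f t) (hderiv : deriv f t ≠ 0)
    (hinj : ∀ s ∈ S, f s = f t → s = t) :
    ∃ c > 0, ∀ s ∈ S, c * |s - t| ≤ ‖f s - f t‖ := by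
  have hcont : ContinuousOn (dslope f t) S := by
    intro s hs
    rcases eq_or_ne s t with rfl | hst
    · exact (continuousAt_dslope_same.2 hdiff).continuousWithinAt
    · exact (continuousWithinAt_dslope_of_ne hst).2 (hf s hs)
  have hpos : ∀ s ∈ S, 0 < ‖dslope f t s‖ := by
    intro s hs
    rw [norm_pos_iff]
    rcases eq_or_ne s t with rfl | hst
    · rwa [dslope_same]
    · rw [dslope_of_ne f hst, slope_def_module]
      exact smul_ne_zero (inv_ne_zero (sub_ne_zero.2 hst))
        (sub_ne_zero.2 fun h => hst (hinj s hs h))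
  obtain ⟨c, hc, hle⟩ := hS.exists_forall_le' hcont.norm hpos
  refine ⟨c, hc, fun s hs => ?_⟩
  rw [← sub_smul_dslope f t s, norm_smul, norm_eq_abs, mul_comm]
  exact mul_le_mul_of_nonneg_left (hle s hs) (abs_nonneg _)

end Chords

/-! ### The kernel near the curve -/

theorem sq_norm_le_dot2_self (v : ℝ × ℝ) : ‖v‖ ^ 2 ≤ dot2 v v := by
  rcases max_choice ‖v.1‖ ‖v.2‖ with h | h <;>
  · rw [Prod.norm_def, h, norm_eq_abs, sq_abs, dot2]
    nlinarith [sq_nonneg v.1, sq_nonneg v.2]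

theorem abs_dot2_le (v w : ℝ × ℝ) : |dot2 v w| ≤ 2 * (‖v‖ * ‖w‖) := by
  have h1 : |v.1 * w.1| ≤ ‖v‖ * ‖w‖ := by
    rw [abs_mul]; exact mul_le_mul (norm_fst_le v) (norm_fst_le w) (abs_nonneg _) (norm_nonneg _)
  have h2 : |v.2 * w.2| ≤ ‖v‖ * ‖w‖ := by
    rw [abs_mul]; exact mul_le_mul (norm_snd_le v) (norm_snd_le w) (abs_nonneg _) (norm_nonneg _)
  calc |dot2 v w| ≤ |v.1 * w.1| + |v.2 * w.2| := abs_add_le _ _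
    _ ≤ 2 * (‖v‖ * ‖w‖) := by linarith

/-- The kernel `(r·n)³ / ‖r‖⁴`, of which `K1clamped` is the multiple `-1/π` on a unit-speed curve;
it takes the junk value `0` at `r = 0`. -/
def cubicKernel (r n : ℝ × ℝ) : ℝ := dot2 r n ^ 3 / dot2 r r ^ 2

theorem cubicKernel_smul (c : ℝ) (r n : ℝ × ℝ) :
    cubicKernel (c • r) n = c⁻¹ * cubicKernel r n := by
  have hlinear : dot2 (c • r) n = c * dot2 r n := by
    simp only [dot2, Prod.smul_fst, Prod.smul_snd, smul_eq_mul]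
    ring
  have hquadratic : dot2 (c • r) (c • r) = c ^ 2 * dot2 r r := by
    simp only [dot2, Prod.smul_fst, Prod.smul_snd, smul_eq_mul]
    ring
  rcases eq_or_ne c 0 with rfl | hc
  · simp [cubicKernel, dot2]
  · rw [cubicKernel, cubicKernel, hlinear, hquadratic]
    field_simp

theorem abs_cubicKernel_le {r n : ℝ × ℝ} (hrn : dot2 r n ^ 2 ≤ dot2 r r) :
    |cubicKernel r n| ≤ |dot2 r n| / dot2 r r := by
  rcases ((sq_nonneg _).trans hrn).eq_or_lt with hr | hr
  · simp [cubicKernel, ← hr]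
  · rw [cubicKernel, abs_div, abs_pow, abs_of_pos (pow_pos hr 2),
      div_le_div_iff₀ (pow_pos hr 2) hr]
    calc |dot2 r n| ^ 3 * dot2 r r = |dot2 r n| * dot2 r r * dot2 r n ^ 2 := by
          rw [← sq_abs (dot2 r n)]; ring
      _ ≤ |dot2 r n| * dot2 r r * dot2 r r := by gcongr
      _ = |dot2 r n| * dot2 r r ^ 2 := by ring

theorem tendsto_cubicKernel {ι : Type*} {l : Filter ι} {r n : ι → ℝ × ℝ} {r₀ n₀ : ℝ × ℝ}
    (hr : Tendsto r l (𝓝 r₀)) (hn : Tendsto n l (𝓝 n₀)) (hr₀ : dot2 r₀ r₀ ≠ 0) :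
    Tendsto (fun i => cubicKernel (r i) (n i)) l (𝓝 (cubicKernel r₀ n₀)) := by
  have hdot : Continuous fun p : (ℝ × ℝ) × (ℝ × ℝ) => dot2 p.1 p.2 := by
    unfold dot2
    fun_prop
  exact (((hdot.tendsto (r₀, n₀)).comp (hr.prodMk_nhds hn)).pow 3).div
    (((hdot.tendsto (r₀, r₀)).comp (hr.prodMk_nhds hr)).pow 2) (pow_ne_zero 2 hr₀)

section UnitSpeed

variable {γ : ℝ → ℝ × ℝ} {s : ℝ}

theorem dot2_deriv_nor (γ : ℝ → ℝ × ℝ) (s : ℝ) : dot2 (deriv γ s) (nor γ s) = 0 := by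
  simp only [dot2, nor]
  ring

theorem dot2_nor_nor (hs : dot2 (deriv γ s) (deriv γ s) = 1) : dot2 (nor γ s) (nor γ s) = 1 := by
  simp only [dot2, nor] at hs ⊢
  linarith

theorem norm_nor_le_one (hs : dot2 (deriv γ s) (deriv γ s) = 1) : ‖nor γ s‖ ≤ 1 :=
  (sq_le_one_iff₀ (norm_nonneg _)).1 ((sq_norm_le_dot2_self _).trans_eq (dot2_nor_nor hs))

theorem dot2_self_eq_nor_sq_add_tang_sq (hs : dot2 (deriv γ s) (deriv γ s) = 1) (v : ℝ × ℝ) :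
    dot2 v v = dot2 v (nor γ s) ^ 2 + dot2 v (tang γ s) ^ 2 := by
  simp only [dot2, nor, tang] at hs ⊢
  linear_combination (-(v.1 ^ 2 + v.2 ^ 2)) * hs

theorem dot2_nor_sq_le (hs : dot2 (deriv γ s) (deriv γ s) = 1) (v : ℝ × ℝ) :
    dot2 v (nor γ s) ^ 2 ≤ dot2 v v := by
  rw [dot2_self_eq_nor_sq_add_tang_sq hs v]
  exact le_add_of_nonneg_right (sq_nonneg _)

theorem K1clamped_eq_cubicKernel (hs : dot2 (deriv γ s) (deriv γ s) = 1) (x : ℝ × ℝ) :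
    K1clamped γ x s = -(1 / π) * cubicKernel (x - γ s) (nor γ s) := by
  have hpyth := dot2_self_eq_nor_sq_add_tang_sq hs (x - γ s)
  unfold K1clamped cubicKernel
  rcases eq_or_ne (dot2 (x - γ s) (x - γ s)) 0 with hr | hr
  · simp [hr]
  · field_simp
    rw [hpyth]
    ring

theorem abs_dot2_sub_nor_le {K : NNReal} (hγ : Differentiable ℝ γ) (hK : LipschitzWith K (deriv γ))
    (hs : dot2 (deriv γ s) (deriv γ s) = 1) (x : ℝ) :
    |dot2 (γ x - γ s) (nor γ s)| ≤ 2 * K * (x - s) ^ 2 := by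
  have hremainder : dot2 (γ x - γ s) (nor γ s)
      = dot2 (γ x - γ s - (x - s) • deriv γ s) (nor γ s) := by
    have := dot2_deriv_nor γ s
    simp only [dot2, Prod.fst_sub, Prod.snd_sub, Prod.smul_fst, Prod.smul_snd,
      smul_eq_mul] at this ⊢
    linear_combination (x - s) * this
  rw [hremainder]
  calc _ ≤ 2 * (‖γ x - γ s - (x - s) • deriv γ s‖ * ‖nor γ s‖) := abs_dot2_le _ _
    _ ≤ 2 * (K * (x - s) ^ 2 * 1) := by
      gcongr
      · exact norm_sub_sub_smul_deriv_le_of_lipschitzWith hγ hK s x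
      · exact norm_nor_le_one hs
    _ = 2 * K * (x - s) ^ 2 := by ring

end UnitSpeed

/-- The vector `r = x - y` from the point `y = γ(t + u)` of the curve to the point
`x = γ(t) + h n(t)` at signed distance `h` from the curve along the normal. -/
def offsetChord (γ : ℝ → ℝ × ℝ) (t h u : ℝ) : ℝ × ℝ := γ t + h • nor γ t - γ (t + u)

section OffsetChord

variable {γ : ℝ → ℝ × ℝ} {K : NNReal} {t : ℝ}

theorem dot2_offsetChord_self (ht : dot2 (deriv γ t) (deriv γ t) = 1) (h u : ℝ) :
    dot2 (offsetChord γ t h u) (offsetChord γ t h u)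
      = h ^ 2 - 2 * h * dot2 (γ (t + u) - γ t) (nor γ t)
        + dot2 (γ (t + u) - γ t) (γ (t + u) - γ t) := by
  have hn := dot2_nor_nor ht
  simp only [offsetChord, dot2, Prod.fst_sub, Prod.snd_sub, Prod.fst_add, Prod.snd_add,
    Prod.smul_fst, Prod.smul_snd, smul_eq_mul] at hn ⊢
  linear_combination h ^ 2 * hn

theorem abs_dot2_offsetChord_nor_le (hγ : Differentiable ℝ γ) (hK : LipschitzWith K (deriv γ))
    (harc : ∀ s, dot2 (deriv γ s) (deriv γ s) = 1) (h u : ℝ) :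
    |dot2 (offsetChord γ t h u) (nor γ (t + u))| ≤ |h| + 2 * K * u ^ 2 := by
  have hsplit : dot2 (offsetChord γ t h u) (nor γ (t + u))
      = h * dot2 (nor γ t) (nor γ (t + u)) + dot2 (γ t - γ (t + u)) (nor γ (t + u)) := by
    simp only [offsetChord, dot2, Prod.fst_sub, Prod.snd_sub, Prod.fst_add, Prod.snd_add,
      Prod.smul_fst, Prod.smul_snd, smul_eq_mul]
    ring
  have hnn : |dot2 (nor γ t) (nor γ (t + u))| ≤ 1 :=
    (sq_le_one_iff_abs_le_one _).1
      ((dot2_nor_sq_le (harc _) _).trans_eq (dot2_nor_nor (harc t)))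
  have hchord := abs_dot2_sub_nor_le hγ hK (harc (t + u)) t
  rw [sub_add_cancel_left, neg_sq] at hchord
  calc _ ≤ |h| * |dot2 (nor γ t) (nor γ (t + u))| + |dot2 (γ t - γ (t + u)) (nor γ (t + u))| := by
        rw [hsplit, ← abs_mul]; exact abs_add_le _ _
    _ ≤ |h| + 2 * K * u ^ 2 := by
        gcongr
        exact mul_le_of_le_one_right (abs_nonneg h) hnn

theorem exists_le_dot2_offsetChord_self {R : ℝ} (hγ : Differentiable ℝ γ)
    (hK : LipschitzWith K (deriv γ)) (ht : dot2 (deriv γ t) (deriv γ t) = 1)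
    (hinj : ∀ s, |s - t| ≤ R → γ s = γ t → s = t) :
    ∃ m > 0, ∀ᶠ h in 𝓝 (0 : ℝ), ∀ u, |u| ≤ R →
      m * (h ^ 2 + u ^ 2) ≤ dot2 (offsetChord γ t h u) (offsetChord γ t h u) := by
  have hderiv : deriv γ t ≠ 0 := fun h0 => by simp [h0, dot2] at ht
  obtain ⟨c, hc, hchord⟩ := exists_pos_mul_abs_sub_le_norm_sub (isCompact_closedBall t R)
    hγ.continuous.continuousOn (hγ t) hderiv hinj
  have hsmall : ∀ᶠ h in 𝓝 (0 : ℝ), |h| * (4 * K) < c ^ 2 / 2 :=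
    ContinuousAt.eventually_lt (by fun_prop) continuousAt_const (by simpa using pow_pos hc 2)
  refine ⟨min 1 (c ^ 2 / 2), by positivity, hsmall.mono fun h hh u hu => ?_⟩
  have hnormal : 2 * h * dot2 (γ (t + u) - γ t) (nor γ t) ≤ |h| * (4 * K) * u ^ 2 := by
    have := abs_dot2_sub_nor_le hγ hK ht (t + u)
    rw [add_sub_cancel_left] at this
    calc _ ≤ 2 * (|h| * |dot2 (γ (t + u) - γ t) (nor γ t)|) := by
          rw [mul_assoc, ← abs_mul]; gcongr; exact le_abs_self _
      _ ≤ 2 * (|h| * (2 * K * u ^ 2)) := by gcongr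
      _ = |h| * (4 * K) * u ^ 2 := by ring
  have hdist : c ^ 2 * u ^ 2 ≤ dot2 (γ (t + u) - γ t) (γ (t + u) - γ t) := by
    have := hchord (t + u) (by simpa [dist_eq_norm] using hu)
    rw [add_sub_cancel_left] at this
    calc c ^ 2 * u ^ 2 = (c * |u|) ^ 2 := by rw [mul_pow, sq_abs]
      _ ≤ ‖γ (t + u) - γ t‖ ^ 2 := by gcongr
      _ ≤ _ := sq_norm_le_dot2_self _
  calc _ ≤ 1 * h ^ 2 + c ^ 2 / 2 * u ^ 2 := by
        rw [mul_add]
        gcongr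
        exacts [min_le_left _ _, min_le_right _ _]
    _ ≤ h ^ 2 - |h| * (4 * K) * u ^ 2 + c ^ 2 * u ^ 2 := by
        linarith [mul_le_mul_of_nonneg_right hh.le (sq_nonneg u)]
    _ ≤ _ := by
        rw [dot2_offsetChord_self ht]
        linarith

theorem exists_abs_cubicKernel_offsetChord_le {R : ℝ} (hγ : Differentiable ℝ γ)
    (hK : LipschitzWith K (deriv γ)) (harc : ∀ s, dot2 (deriv γ s) (deriv γ s) = 1)
    (hinj : ∀ s, |s - t| ≤ R → γ s = γ t → s = t) :
    ∃ C ≥ 0, ∀ᶠ h in 𝓝 (0 : ℝ), ∀ u, |u| ≤ R →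
      |cubicKernel (offsetChord γ t h u) (nor γ (t + u))| ≤ C * (1 + |h| / (h ^ 2 + u ^ 2)) := by
  obtain ⟨m, hm, hlower⟩ := exists_le_dot2_offsetChord_self hγ hK (harc t) hinj
  refine ⟨(1 + 2 * K) / m, by positivity, hlower.mono fun h hh u hu => ?_⟩
  have hu2 : u ^ 2 / (h ^ 2 + u ^ 2) ≤ 1 :=
    div_le_one_of_le₀ (le_add_of_nonneg_left (sq_nonneg h)) (by positivity)
  rcases (by positivity : 0 ≤ h ^ 2 + u ^ 2).eq_or_lt with h0 | hpos
  · obtain ⟨rfl, rfl⟩ : h = 0 ∧ u = 0 := by constructor <;> nlinarith [sq_nonneg h, sq_nonneg u]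
    simp only [cubicKernel, offsetChord, dot2, zero_smul, add_zero, sub_self, Prod.fst_zero,
      Prod.snd_zero, zero_mul, zero_pow three_ne_zero, zero_div, abs_zero]
    positivity
  calc _ ≤ |dot2 (offsetChord γ t h u) (nor γ (t + u))|
        / dot2 (offsetChord γ t h u) (offsetChord γ t h u) :=
        abs_cubicKernel_le (dot2_nor_sq_le (harc _) _)
    _ ≤ (|h| + 2 * K * u ^ 2) / (m * (h ^ 2 + u ^ 2)) := by
        gcongr
        exacts [abs_dot2_offsetChord_nor_le hγ hK harc h u, hh u hu]
    _ = (2 * K * (u ^ 2 / (h ^ 2 + u ^ 2)) + |h| / (h ^ 2 + u ^ 2)) / m := by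
        field_simp
        ring
    _ ≤ ((1 + 2 * K) * 1 + (1 + 2 * K) * (|h| / (h ^ 2 + u ^ 2))) / m := by
        gcongr
        · exact le_add_of_nonneg_left zero_le_one
        · exact le_mul_of_one_le_left (by positivity) (le_add_of_nonneg_right (by positivity))
    _ = (1 + 2 * K) / m * (1 + |h| / (h ^ 2 + u ^ 2)) := by ring

theorem tendsto_inv_smul_offsetChord (hγ : DifferentiableAt ℝ γ t) (v : ℝ) :
    Tendsto (fun h => h⁻¹ • offsetChord γ t h (h * v)) (𝓝[≠] 0)
      (𝓝 (nor γ t - v • deriv γ t)) := by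
  have hline : HasDerivAt (fun h : ℝ => γ (t + h * v)) (v • deriv γ t) 0 := by
    have hγ0 : HasDerivAt γ (deriv γ t) (t + 0 * v) := by simpa using hγ.hasDerivAt
    simpa [Function.comp_def] using hγ0.scomp 0 (((hasDerivAt_id (0 : ℝ)).mul_const v).const_add t)
  refine (tendsto_const_nhds.sub hline.tendsto_slope_zero).congr' ?_
  filter_upwards [self_mem_nhdsWithin] with h hh
  rw [offsetChord, zero_add, zero_mul, add_zero, smul_sub, smul_sub, smul_add,
    inv_smul_smul₀ hh]
  abel

theorem dot2_nor_sub_smul_deriv (ht : dot2 (deriv γ t) (deriv γ t) = 1) (v : ℝ) :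
    dot2 (nor γ t - v • deriv γ t) (nor γ t) = 1 ∧
      dot2 (nor γ t - v • deriv γ t) (nor γ t - v • deriv γ t) = 1 + v ^ 2 := by
  simp only [dot2, nor, Prod.fst_sub, Prod.snd_sub, Prod.smul_fst, Prod.smul_snd,
    smul_eq_mul] at ht ⊢
  exact ⟨by linear_combination ht, by linear_combination (1 + v ^ 2) * ht⟩

end OffsetChord

/-- The integrand `K₁(γ(t) + h n(t), γ(s)) σ(s)` of the layer potential at signed distance `h` from
the curve, in the centred arc-length variable `u = s - t`. -/
def offsetIntegrand (γ : ℝ → ℝ × ℝ) (σ : ℝ → ℝ) (t h u : ℝ) : ℝ :=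
  K1clamped γ (γ t + h • nor γ t) (t + u) * σ (t + u)

section OffsetIntegrand

variable {γ : ℝ → ℝ × ℝ} {K : NNReal} {σ : ℝ → ℝ} {t R : ℝ}

theorem offsetIntegrand_eq_cubicKernel (harc : ∀ s, dot2 (deriv γ s) (deriv γ s) = 1)
    (h u : ℝ) :
    offsetIntegrand γ σ t h u
      = -(1 / π) * cubicKernel (offsetChord γ t h u) (nor γ (t + u)) * σ (t + u) := by
  rw [offsetIntegrand, K1clamped_eq_cubicKernel (harc _), offsetChord]

theorem continuous_nor (hγ : Continuous (deriv γ)) : Continuous (nor γ) := by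
  unfold nor
  fun_prop

theorem stronglyMeasurable_offsetIntegrand (hγ : Continuous γ) (hσ : Measurable σ) (h : ℝ) :
    StronglyMeasurable (offsetIntegrand γ σ t h) := by
  refine Measurable.stronglyMeasurable ?_
  unfold offsetIntegrand K1clamped dot2 tang nor
  fun_prop

theorem exists_abs_offsetIntegrand_le (hγ : Differentiable ℝ γ)
    (hK : LipschitzWith K (deriv γ)) (harc : ∀ s, dot2 (deriv γ s) (deriv γ s) = 1)
    (hinj : ∀ s, |s - t| ≤ R → γ s = γ t → s = t) (hσ : Continuous σ) :
    ∃ C ≥ 0, ∀ᶠ h in 𝓝 (0 : ℝ), ∀ u, |u| ≤ R →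
      |offsetIntegrand γ σ t h u| ≤ C * (1 + |h| / (h ^ 2 + u ^ 2)) := by
  obtain ⟨C, hC, hkernel⟩ := exists_abs_cubicKernel_offsetChord_le hγ hK harc hinj
  obtain ⟨B, hB⟩ := (isCompact_closedBall t R).exists_bound_of_continuousOn hσ.continuousOn
  refine ⟨1 / π * C * |B|, by positivity, hkernel.mono fun h hh u hu => ?_⟩
  have hσu : |σ (t + u)| ≤ |B| :=
    (hB _ (by simpa [dist_eq_norm] using hu)).trans (le_abs_self B)
  rw [offsetIntegrand_eq_cubicKernel harc, abs_mul, abs_mul, abs_neg,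
    abs_of_pos (one_div_pos.2 pi_pos)]
  calc _ ≤ 1 / π * (C * (1 + |h| / (h ^ 2 + u ^ 2))) * |B| := by
        gcongr
        exact hh u hu
    _ = 1 / π * C * |B| * (1 + |h| / (h ^ 2 + u ^ 2)) := by ring

theorem tendsto_smul_offsetIntegrand (hγ : DifferentiableAt ℝ γ t) (hγ' : Continuous (deriv γ))
    (harc : ∀ s, dot2 (deriv γ s) (deriv γ s) = 1) (hσ : Continuous σ) (v : ℝ) :
    Tendsto (fun h => h • offsetIntegrand γ σ t h (h * v)) (𝓝[≠] 0)
      (𝓝 (-(1 / π) * ((1 + v ^ 2) ^ 2)⁻¹ * σ t)) := by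
  have hpoint : Tendsto (fun h : ℝ => t + h * v) (𝓝[≠] 0) (𝓝 t) :=
    Tendsto.mono_left (Continuous.tendsto' (by fun_prop) 0 t (by simp)) nhdsWithin_le_nhds
  obtain ⟨hdot, hnorm⟩ := dot2_nor_sub_smul_deriv (harc t) v
  have hkernel : Tendsto
      (fun h => cubicKernel (h⁻¹ • offsetChord γ t h (h * v)) (nor γ (t + h * v))) (𝓝[≠] 0)
      (𝓝 ((1 + v ^ 2) ^ 2)⁻¹) := by
    have hlimit : cubicKernel (nor γ t - v • deriv γ t) (nor γ t) = ((1 + v ^ 2) ^ 2)⁻¹ := by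
      rw [cubicKernel, hdot, hnorm, one_pow, one_div]
    rw [← hlimit]
    exact tendsto_cubicKernel (tendsto_inv_smul_offsetChord hγ v)
      (((continuous_nor hγ').tendsto t).comp hpoint) (by rw [hnorm]; positivity)
  refine ((hkernel.const_mul (-(1 / π))).mul ((hσ.tendsto t).comp hpoint)).congr fun h => ?_
  rw [offsetIntegrand_eq_cubicKernel harc, cubicKernel_smul, inv_inv, smul_eq_mul,
    Function.comp_apply]
  ring

theorem tendsto_offsetIntegrand (hγ : Differentiable ℝ γ) (hK : LipschitzWith K (deriv γ))
    (harc : ∀ s, dot2 (deriv γ s) (deriv γ s) = 1)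
    (hinj : ∀ s, |s - t| ≤ R → γ s = γ t → s = t) {u : ℝ} (hu : u ≠ 0) (huR : |u| ≤ R) :
    Tendsto (fun h => offsetIntegrand γ σ t h u) (𝓝 0) (𝓝 (offsetIntegrand γ σ t 0 u)) := by
  obtain ⟨m, hm, hlower⟩ := exists_le_dot2_offsetChord_self hγ hK (harc t) hinj
  have hne : dot2 (offsetChord γ t 0 u) (offsetChord γ t 0 u) ≠ 0 :=
    (lt_of_lt_of_le (by positivity) (hlower.self_of_nhds u huR)).ne'
  have hchord : Continuous fun h => offsetChord γ t h u := by
    unfold offsetChord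
    fun_prop
  simp only [offsetIntegrand_eq_cubicKernel harc]
  exact ((tendsto_cubicKernel (hchord.tendsto 0) tendsto_const_nhds hne).const_mul _).mul_const _

theorem tendsto_integral_offsetIntegrand_right (hR : 0 < R) (hγ : Differentiable ℝ γ)
    (hK : LipschitzWith K (deriv γ)) (harc : ∀ s, dot2 (deriv γ s) (deriv γ s) = 1)
    (hinj : ∀ s, |s - t| ≤ R → γ s = γ t → s = t) (hσ : Continuous σ) :
    Tendsto (fun h => ∫ u in (-R)..R, offsetIntegrand γ σ t h u) (𝓝[>] 0)
      (𝓝 (-(1 / 2) * σ t + ∫ u in (-R)..R, offsetIntegrand γ σ t 0 u)) := by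
  obtain ⟨C, hC, hbound⟩ := exists_abs_offsetIntegrand_le hγ hK harc hinj hσ
  rw [← integral_neg_one_div_pi_mul_inv_one_add_sq_sq_mul]
  refine tendsto_integral_of_poisson_bound_right hR hC
    (stronglyMeasurable_offsetIntegrand hγ.continuous hσ.measurable) ?_
    (fun v => (tendsto_smul_offsetIntegrand (hγ t) hK.continuous harc hσ v).mono_left
      (nhdsGT_le_nhdsNE 0))
    (fun u hu huR => (tendsto_offsetIntegrand hγ hK harc hinj hu huR).mono_left
      nhdsWithin_le_nhds)
  filter_upwards [nhdsWithin_le_nhds hbound, self_mem_nhdsWithin] with h hh hpos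
  rwa [abs_of_pos hpos] at hh

theorem tendsto_integral_offsetIntegrand_left (hR : 0 < R) (hγ : Differentiable ℝ γ)
    (hK : LipschitzWith K (deriv γ)) (harc : ∀ s, dot2 (deriv γ s) (deriv γ s) = 1)
    (hinj : ∀ s, |s - t| ≤ R → γ s = γ t → s = t) (hσ : Continuous σ) :
    Tendsto (fun h => ∫ u in (-R)..R, offsetIntegrand γ σ t h u) (𝓝[<] 0)
      (𝓝 (1 / 2 * σ t + ∫ u in (-R)..R, offsetIntegrand γ σ t 0 u)) := by
  obtain ⟨C, hC, hbound⟩ := exists_abs_offsetIntegrand_le hγ hK harc hinj hσ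
  rw [show 1 / 2 * σ t = -(-(1 / 2) * σ t) by ring,
    ← integral_neg_one_div_pi_mul_inv_one_add_sq_sq_mul]
  exact tendsto_integral_of_poisson_bound_left hR hC
    (stronglyMeasurable_offsetIntegrand hγ.continuous hσ.measurable) (nhdsWithin_le_nhds hbound)
    (fun v => (tendsto_smul_offsetIntegrand (hγ t) hK.continuous harc hσ v).mono_left
      (nhdsLT_le_nhdsNE 0))
    (fun u hu huR => (tendsto_offsetIntegrand hγ hK harc hinj hu huR).mono_left
      nhdsWithin_le_nhds)

end OffsetIntegrand

section ClosedCurve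

variable {γ : ℝ → ℝ × ℝ} {K : NNReal} {L : ℝ}

theorem periodic_K1clamped_mul {σ : ℝ → ℝ} (hper : Function.Periodic γ L)
    (hσper : Function.Periodic σ L) (x : ℝ × ℝ) :
    Function.Periodic (fun s => K1clamped γ x s * σ s) L := fun s => by
  simp only [K1clamped, nor, tang, hper s, periodic_deriv hper s, hσper s]

theorem integral_K1clamped_mul_eq_integral_offsetIntegrand {σ : ℝ → ℝ}
    (hper : Function.Periodic γ L) (hσper : Function.Periodic σ L) (t h : ℝ) :
    ∫ s in (0 : ℝ)..L, K1clamped γ (γ t + h • nor γ t) s * σ s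
      = ∫ u in (-(L / 2))..(L / 2), offsetIntegrand γ σ t h u :=
  integral_eq_integral_centered_of_periodic (periodic_K1clamped_mul hper hσper _) t

theorem exists_offset_ne (hγ : Differentiable ℝ γ) (hK : LipschitzWith K (deriv γ))
    (hper : Function.Periodic γ L) (hL : 0 < L) {t : ℝ}
    (ht : dot2 (deriv γ t) (deriv γ t) = 1)
    (hinj : ∀ s, |s - t| ≤ L / 2 → γ s = γ t → s = t) :
    ∃ h₀ > 0, ∀ h : ℝ, 0 < |h| → |h| < h₀ → ∀ s, γ t + h • nor γ t ≠ γ s := by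
  obtain ⟨m, hm, hlower⟩ := exists_le_dot2_offsetChord_self hγ hK ht hinj
  obtain ⟨h₀, hh₀, hnear⟩ := Metric.eventually_nhds_iff.1 hlower
  refine ⟨h₀, hh₀, fun h hpos hlt s heq => ?_⟩
  obtain ⟨u, hu, hγu⟩ := exists_abs_le_half_of_periodic hper hL t s
  have hle := hnear (by simpa using hlt) u hu
  have hzero : offsetChord γ t h u = 0 := by rw [offsetChord, hγu, heq, sub_self]
  have hh : 0 < m * (h ^ 2 + u ^ 2) := by have := abs_pos.1 hpos; positivity
  rw [hzero] at hle
  exact hh.not_ge (by simpa [dot2] using hle)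

end ClosedCurve

theorem stmt14_general (L : ℝ) (hL : 0 < L) (γ : ℝ → ℝ × ℝ) (hγ : Differentiable ℝ γ)
    {K : NNReal} (hK : LipschitzWith K (deriv γ))
    (hper : ∀ s, γ (s + L) = γ s)
    (hinj : Set.InjOn γ (Set.Ico 0 L))
    (harc : ∀ s, dot2 (deriv γ s) (deriv γ s) = 1)
    (σ : ℝ → ℝ) (hσ : Continuous σ) (hσper : ∀ s, σ (s + L) = σ s)
    (t : ℝ) :
    ∃ h₀ > (0 : ℝ),
      (∀ h : ℝ, 0 < |h| → |h| < h₀ → ∀ s : ℝ, γ t + h • nor γ t ≠ γ s) ∧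
      (∃ M : ℝ, ∀ s ∈ Set.Icc (0 : ℝ) L, |K1clamped γ (γ t) s * σ s| ≤ M) ∧
      Tendsto
        (fun h : ℝ => ∫ s in (0 : ℝ)..L, K1clamped γ (γ t + h • nor γ t) s * σ s)
        (𝓝[>] (0 : ℝ))
        (𝓝 (-(1 / 2) * σ t + ∫ s in (0 : ℝ)..L, K1clamped γ (γ t) s * σ s)) ∧
      Tendsto
        (fun h : ℝ => ∫ s in (0 : ℝ)..L, K1clamped γ (γ t + h • nor γ t) s * σ s)
        (𝓝[<] (0 : ℝ))
        (𝓝 (1 / 2 * σ t + ∫ s in (0 : ℝ)..L, K1clamped γ (γ t) s * σ s)) := by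
  have hhalf : ∀ s, |s - t| ≤ L / 2 → γ s = γ t → s = t := fun s hs =>
    eq_of_periodic_of_injOn_Ico hper hL hinj (hs.trans_lt (half_lt_self hL))
  have hintegral := integral_K1clamped_mul_eq_integral_offsetIntegrand hper hσper t
  have hintegral_zero : ∫ s in (0 : ℝ)..L, K1clamped γ (γ t) s * σ s
      = ∫ u in (-(L / 2))..(L / 2), offsetIntegrand γ σ t 0 u := by
    simpa using hintegral 0
  obtain ⟨h₀, hh₀, hoff⟩ := exists_offset_ne hγ hK hper hL (harc t) hhalf
  obtain ⟨C, -, hbound⟩ := exists_abs_offsetIntegrand_le hγ hK harc hhalf hσ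
  refine ⟨h₀, hh₀, hoff, ⟨C, fun s _ => ?_⟩, ?_, ?_⟩
  · obtain ⟨u, hu, hus⟩ :=
      exists_abs_le_half_of_periodic (periodic_K1clamped_mul hper hσper (γ t)) hL t s
    simpa [offsetIntegrand, ← hus] using hbound.self_of_nhds u hu
  all_goals simp only [hintegral, hintegral_zero]
  · exact tendsto_integral_offsetIntegrand_right (half_pos hL) hγ hK harc hhalf hσ
  · exact tendsto_integral_offsetIntegrand_left (half_pos hL) hγ hK harc hhalf hσ

theorem stmt14 (L : ℝ) (hL : 0 < L) (γ : ℝ → ℝ × ℝ)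
    (hγ : ContDiff ℝ (⊤ : ℕ∞) γ)
    (hper : ∀ s, γ (s + L) = γ s)
    (hinj : Set.InjOn γ (Set.Ico 0 L))
    (harc : ∀ s, dot2 (deriv γ s) (deriv γ s) = 1)
    (σ : ℝ → ℝ) (hσ : ContDiff ℝ (⊤ : ℕ∞) σ) (hσper : ∀ s, σ (s + L) = σ s)
    (t : ℝ) :
    ∃ h₀ > (0 : ℝ),
      (∀ h : ℝ, 0 < |h| → |h| < h₀ → ∀ s : ℝ, γ t + h • nor γ t ≠ γ s) ∧
      (∃ M : ℝ, ∀ s ∈ Set.Icc (0 : ℝ) L, |K1clamped γ (γ t) s * σ s| ≤ M) ∧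
      Tendsto
        (fun h : ℝ => ∫ s in (0 : ℝ)..L, K1clamped γ (γ t + h • nor γ t) s * σ s)
        (𝓝[>] (0 : ℝ))
        (𝓝 (-(1 / 2) * σ t + ∫ s in (0 : ℝ)..L, K1clamped γ (γ t) s * σ s)) ∧
      Tendsto
        (fun h : ℝ => ∫ s in (0 : ℝ)..L, K1clamped γ (γ t + h • nor γ t) s * σ s)
        (𝓝[<] (0 : ℝ))
        (𝓝 (1 / 2 * σ t + ∫ s in (0 : ℝ)..L, K1clamped γ (γ t) s * σ s)) := by
  obtain ⟨K, hK⟩ := exists_lipschitzWith_deriv_of_periodic hper hL.ne' (contDiff_infty.1 hγ 2)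
  exact stmt14_general L hL γ (hγ.differentiable (by simp)) hK hper hinj harc σ
    hσ.continuous hσper t
end
end

section
/- (Jump relation for the normal derivative of the clamped-plate layer potential K₂, biharmonic part.) Let σ : ℝ → ℝ be infinitely differentiable with σ(s+L) = σ(s) for all s, and fix t ∈ ℝ. Define K(x, γ(s)) = (1/(2π))·[(r·τ(s))(τ(s)·n(t)) − (r·n(s))(n(s)·n(t))]/‖r‖² + (1/(2π))·(r·n(t))·[(r·n(s))² − (r·τ(s))²]/‖r‖⁴ with r = x − γ(s) (this kernel equals −G^B_{n_x n_y n_y} + G^B_{n_x τ_y τ_y} with x-derivative in the direction n(t)). Then there is h₀ > 0 such that for 0 < |h| < h₀ the point γ(t) + h·n(t) does not lie on the curve, the function s ↦ K(γ(t), γ(s))·σ(s) is bounded on [0, L] with Lebesgue integral I := ∫₀^L K(γ(t), γ(s))σ(s) ds, and lim_{h→0⁺} ∫₀^L K(γ(t)+h·n(t), γ(s))σ(s) ds = −(1/2)σ(t) + I, while lim_{h→0⁻} ∫₀^L K(γ(t)+h·n(t), γ(s))σ(s) ds = (1/2)σ(t) + I. -/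
open Real Filter Topology MeasureTheory

noncomputable section

/-- The kernel `K(x, γ(s)) = −G^B_{n_x n_y n_y} + G^B_{n_x τ_y τ_y}`, given by its
explicit formula, with `r = x − γ(s)` and the `x`-derivative in the direction `n(t)`. -/
def K22clamped (γ : ℝ → ℝ × ℝ) (t : ℝ) (x : ℝ × ℝ) (s : ℝ) : ℝ :=
  1 / (2 * π) *
      (dot2 (x - γ s) (tang γ s) * dot2 (tang γ s) (nor γ t)
        - dot2 (x - γ s) (nor γ s) * dot2 (nor γ s) (nor γ t))
      / dot2 (x - γ s) (x - γ s)
    + 1 / (2 * π) * dot2 (x - γ s) (nor γ t) *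
      ((dot2 (x - γ s) (nor γ s)) ^ 2 - (dot2 (x - γ s) (tang γ s)) ^ 2)
      / (dot2 (x - γ s) (x - γ s)) ^ 2

/-!
Write `r = x - γ s`. Because `τ(s)` is a unit vector, the two terms of the kernel combine into
`-(1 / π) (r · τ(s)) (r · n(s)) (r · τ(t)) / ‖r‖⁴`. On the normal line `x = γ t + h n(t)`, with
`u = s - t`, the factors of the numerator are `-u`, `h`, `-u` up to errors quadratic in `(h, u)`,
and `‖r‖²` is `u² + h²` up to a cubic error, so near `(h, s) = (0, t)` the kernel is
`-(1 / π) h u² / (u² + h²)²` plus a bounded remainder. The integral of the remainder against `σ`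
converges by dominated convergence, while the singular part concentrates at `u = 0` with total mass
tending to `∓1/2` as `h → 0±`, which is the jump.
-/

open Asymptotics

section Periodic

variable {α β : Type*} [AddCommGroup α] [LinearOrder α] [IsOrderedAddMonoid α] [Archimedean α]

lemma injOn_Ico_of_periodic {f : α → β} {c : α} (hc : 0 < c) (hf : Function.Periodic f c) {a : α}
    (hinj : Set.InjOn f (Set.Ico a (a + c))) (b : α) : Set.InjOn f (Set.Ico b (b + c)) := by
  have map_toIcoMod (x : α) : f (toIcoMod hc a x) = f x := hf.sub_zsmul_eq _
  intro x hx y hy hxy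
  have hmod : toIcoMod hc a x = toIcoMod hc a y :=
    hinj (toIcoMod_mem_Ico hc a x) (toIcoMod_mem_Ico hc a y) <| by
      simpa only [map_toIcoMod] using hxy
  have hmod' : toIcoMod hc b x = toIcoMod hc b y :=
    (toIcoMod_inj hc).2 ((toIcoMod_inj hc).1 hmod)
  rwa [(toIcoMod_eq_self hc).2 hx, (toIcoMod_eq_self hc).2 hy] at hmod'

end Periodic

lemma periodic_deriv_s16 {𝕜 F : Type*} [NontriviallyNormedField 𝕜] [NormedAddCommGroup F]
    [NormedSpace 𝕜 F] {f : 𝕜 → F} {c : 𝕜} (hf : Function.Periodic f c) :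
    Function.Periodic (deriv f) c := by
  intro x
  rw [← deriv_comp_add_const, funext hf]

lemma exists_mem_Icc_eq_of_periodic {β : Type*} {f : ℝ → β} {c : ℝ} (hc : 0 < c)
    (hf : Function.Periodic f c) (a x : ℝ) :
    ∃ y ∈ Set.Icc (a - c / 2) (a + c / 2), f x = f y := by
  obtain ⟨y, hy, heq⟩ := hf.exists_mem_Ico hc x (a - c / 2)
  exact ⟨y, ⟨hy.1, by linarith [hy.2]⟩, heq⟩

lemma integral_eq_integral_sub_half_add_half {E : Type*} [NormedAddCommGroup E] [NormedSpace ℝ E]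
    {f : ℝ → E} {c : ℝ} (hf : Function.Periodic f c) (a : ℝ) :
    ∫ x in (0 : ℝ)..c, f x = ∫ x in (a - c / 2)..(a + c / 2), f x := by
  have h := hf.intervalIntegral_add_eq 0 (a - c / 2)
  rwa [zero_add, show a - c / 2 + c = a + c / 2 by ring] at h

section Asymptotics

variable {α : Type*} {l : Filter α}

lemma exists_eventually_forall_norm_le_of_isBigO_one {X Y E : Type*} [TopologicalSpace X]
    [TopologicalSpace Y] [SeminormedAddCommGroup E] {f : X × Y → E} {x₀ : X} {K : Set Y}
    (hK : IsCompact K) (hf : ∀ y ∈ K, f =O[𝓝 (x₀, y)] fun _ => (1 : ℝ)) :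
    ∃ M, ∀ᶠ x in 𝓝 x₀, ∀ y ∈ K, ‖f (x, y)‖ ≤ M := by
  refine hK.induction_on ⟨0, by simp⟩ ?_ ?_ fun y hy => ?_
  · rintro s t hst ⟨M, hM⟩
    exact ⟨M, hM.mono fun x hx y hy => hx y (hst hy)⟩
  · rintro s t ⟨M, hM⟩ ⟨M', hM'⟩
    refine ⟨max M M', ?_⟩
    filter_upwards [hM, hM'] with x hx hx' y hy
    exact hy.elim (fun h => (hx y h).trans (le_max_left ..))
      fun h => (hx' y h).trans (le_max_right ..)
  · obtain ⟨C, hC⟩ := (hf y hy).bound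
    rw [nhds_prod_eq] at hC
    obtain ⟨p, hp, q, hq, hpq⟩ := eventually_prod_iff.1 hC
    refine ⟨{y | q y}, nhdsWithin_le_nhds hq, C, hp.mono fun x hx y hy => ?_⟩
    simpa using hpq hx hy

lemma isBigO_one_div_sub_div {𝕜 : Type*} [NormedField 𝕜] {N N₀ D D₀ : α → 𝕜} (hD : D =Θ[l] D₀)
    (hN : (fun x => N x - N₀ x) =O[l] D₀)
    (hND : (fun x => N₀ x * (D x - D₀ x)) =O[l] fun x => D₀ x ^ 2) :
    (fun x => N x / D x - N₀ x / D₀ x) =O[l] fun _ => (1 : ℝ) := by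
  have hnum : (fun x => (N x - N₀ x) / D x) =O[l] fun _ => (1 : ℝ) :=
    (div_isBoundedUnder_of_isBigO (hN.trans hD.isBigO_symm)).isBigO_one ℝ
  have hden : (fun x => N₀ x * (D x - D₀ x) / (D x * D₀ x)) =O[l] fun _ => (1 : ℝ) := by
    refine (div_isBoundedUnder_of_isBigO (hND.trans ?_)).isBigO_one ℝ
    simpa only [sq] using hD.isBigO_symm.mul (isBigO_refl D₀ l)
  refine (hnum.sub hden).congr' ?_ .rfl
  filter_upwards [hD.eq_zero_iff] with x hx
  rcases eq_or_ne (D₀ x) 0 with h₀ | h₀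
  · simp [h₀, hx.2 h₀]
  · have h : D x ≠ 0 := mt hx.1 h₀
    field_simp
    ring

lemma isBigO_mul_mul_sub {u h w P Q S : α → ℝ} (hu : u =O[l] w) (hh : h =O[l] w)
    (hw : Tendsto w l (𝓝 0))
    (hP : (fun x => P x + u x) =O[l] fun x => w x ^ 2)
    (hQ : (fun x => Q x - h x) =O[l] fun x => w x ^ 2)
    (hS : (fun x => S x + u x) =O[l] fun x => w x ^ 2) :
    (fun x => P x * Q x * S x - h x * u x ^ 2) =O[l] fun x => w x ^ 4 := by
  have hsq : (fun x => w x ^ 2) =O[l] w := by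
    simpa only [sq, mul_one] using (isBigO_refl w l).mul (hw.isBigO_one ℝ)
  have hQw : Q =O[l] w := ((hQ.trans hsq).add hh).congr_left fun x => sub_add_cancel _ _
  have hSw : S =O[l] w := ((hS.trans hsq).sub hu).congr_left fun x => add_sub_cancel_right _ _
  have errP : (fun x => (P x + u x) * (Q x * S x)) =O[l] fun x => w x ^ 4 :=
    (hP.mul (hQw.mul hSw)).congr_right fun x => by ring
  have errQ : (fun x => u x * (Q x - h x) * S x) =O[l] fun x => w x ^ 4 :=
    ((hu.mul hQ).mul hSw).congr_right fun x => by ring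
  have errS : (fun x => u x * h x * (S x + u x)) =O[l] fun x => w x ^ 4 :=
    ((hu.mul hh).mul hS).congr_right fun x => by ring
  exact ((errP.sub errQ).sub errS).congr_left fun x => by ring

end Asymptotics

section FlatKernel

/-- The Poisson-type kernel `h u² / (u² + h²)²`: `-π` times the kernel `K22clamped` of a straight
line, at signed distance `h` from the line and arc-length offset `u`. -/
def flatKernel (h u : ℝ) : ℝ := h * u ^ 2 / (u ^ 2 + h ^ 2) ^ 2

lemma flatKernel_zero_left (u : ℝ) : flatKernel 0 u = 0 := by simp [flatKernel]

lemma flatKernel_neg_left (h u : ℝ) : flatKernel (-h) u = -flatKernel h u := by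
  simp only [flatKernel, neg_mul, neg_sq, neg_div]

lemma flatKernel_nonneg {h : ℝ} (hh : 0 ≤ h) (u : ℝ) : 0 ≤ flatKernel h u := by
  unfold flatKernel; positivity

lemma flatKernel_le_div_sq {h : ℝ} (hh : 0 ≤ h) (u : ℝ) : flatKernel h u ≤ h / u ^ 2 := by
  rcases eq_or_ne u 0 with rfl | hu
  · simp [flatKernel]
  · calc flatKernel h u ≤ h * u ^ 2 / (u ^ 2) ^ 2 := by
          unfold flatKernel
          gcongr
          linarith [sq_nonneg h]
      _ = h / u ^ 2 := by field_simp

lemma continuousAt_flatKernel {z : ℝ × ℝ} (hz : z ≠ 0) :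
    ContinuousAt (fun z : ℝ × ℝ => flatKernel z.1 z.2) z := by
  unfold flatKernel
  refine ContinuousAt.div (by fun_prop) (by fun_prop) (pow_ne_zero 2 fun h0 => hz ?_)
  ext
  · exact pow_eq_zero_iff two_ne_zero |>.1 (by linarith [sq_nonneg z.1, sq_nonneg z.2])
  · exact pow_eq_zero_iff two_ne_zero |>.1 (by linarith [sq_nonneg z.1, sq_nonneg z.2])

lemma continuous_flatKernel {h : ℝ} (hh : h ≠ 0) : Continuous (flatKernel h) := by
  unfold flatKernel
  exact Continuous.div (by fun_prop) (by fun_prop) fun u => by positivity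

lemma hasDerivAt_arctan_div_sub {h : ℝ} (hh : h ≠ 0) (u : ℝ) :
    HasDerivAt (fun u => 1 / 2 * (arctan (u / h) - h * u / (u ^ 2 + h ^ 2)))
      (flatKernel h u) u := by
  have hpos : u ^ 2 + h ^ 2 ≠ 0 := by positivity
  have harctan := ((hasDerivAt_id u).div_const h).arctan
  have hquot := ((hasDerivAt_id u).const_mul h).div
    (((hasDerivAt_id u).pow 2).add_const (h ^ 2)) hpos
  refine ((harctan.sub hquot).const_mul (1 / 2)).congr_deriv ?_
  have hone : 1 + (u / h) ^ 2 = (u ^ 2 + h ^ 2) / h ^ 2 := by field_simp; ring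
  simp only [id, hone, flatKernel, Pi.pow_apply]
  field_simp
  push_cast
  ring

lemma integral_flatKernel {h : ℝ} (hh : h ≠ 0) (a : ℝ) :
    ∫ u in -a..a, flatKernel h u = arctan (a / h) - h * a / (a ^ 2 + h ^ 2) := by
  rw [intervalIntegral.integral_eq_sub_of_hasDerivAt
    (fun u _ => hasDerivAt_arctan_div_sub hh u) ((continuous_flatKernel hh).intervalIntegrable _ _),
    neg_div, arctan_neg]
  ring

lemma tendsto_integral_flatKernel {a : ℝ} (ha : 0 < a) :
    Tendsto (fun h => ∫ u in -a..a, flatKernel h u) (𝓝[>] 0) (𝓝 (π / 2)) := by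
  have harctan : Tendsto (fun h : ℝ => arctan (a / h)) (𝓝[>] 0) (𝓝 (π / 2)) := by
    refine (tendsto_arctan_atTop.mono_right nhdsWithin_le_nhds).comp ?_
    exact (tendsto_inv_nhdsGT_zero.const_mul_atTop ha).congr fun h => (div_eq_mul_inv a h).symm
  have hquot : Tendsto (fun h : ℝ => h * a / (a ^ 2 + h ^ 2)) (𝓝[>] 0) (𝓝 0) := by
    have hcont : ContinuousAt (fun h : ℝ => h * a / (a ^ 2 + h ^ 2)) 0 :=
      ContinuousAt.div (by fun_prop) (by fun_prop) (by positivity)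
    simpa using hcont.tendsto.mono_left nhdsWithin_le_nhds
  rw [← sub_zero (π / 2)]
  refine (harctan.sub hquot).congr' ?_
  filter_upwards [self_mem_nhdsWithin] with h hh
  exact (integral_flatKernel hh.ne' a).symm

lemma tendstoUniformlyOn_flatKernel_sub (t : ℝ) {U : Set ℝ} (hU : U ∈ 𝓝 t) :
    TendstoUniformlyOn (fun h s => flatKernel h (s - t)) 0 (𝓝[>] 0) Uᶜ := by
  obtain ⟨δ, hδ, hball⟩ := Metric.mem_nhds_iff.1 hU
  have hlim : Tendsto (fun h : ℝ => h / δ ^ 2) (𝓝[>] 0) (𝓝 0) :=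
    ((continuous_id.div_const (δ ^ 2)).tendsto' 0 0 (zero_div _)).mono_left nhdsWithin_le_nhds
  rw [Metric.tendstoUniformlyOn_iff]
  intro ε hε
  filter_upwards [self_mem_nhdsWithin, hlim.eventually_lt_const hε] with h hh hhε s hs
  have hh₀ : 0 ≤ h := le_of_lt hh
  have hδs : δ ≤ |s - t| := by
    simpa [Real.dist_eq] using fun hst => hs (hball hst)
  calc dist ((0 : ℝ → ℝ) s) (flatKernel h (s - t)) = flatKernel h (s - t) := by
        rw [Pi.zero_apply, dist_zero_left, Real.norm_of_nonneg (flatKernel_nonneg hh₀ _)]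
    _ ≤ h / |s - t| ^ 2 := (flatKernel_le_div_sq hh₀ _).trans_eq (by rw [sq_abs])
    _ ≤ h / δ ^ 2 := by gcongr
    _ < ε := hhε

-- `2 / π * flatKernel h (s - t)` is an approximate identity at `t` as `h → 0⁺`.
lemma tendsto_integral_flatKernel_sub_mul {t a : ℝ} (ha : 0 < a) {g : ℝ → ℝ}
    (hg : IntervalIntegrable g volume (t - a) (t + a)) (hgt : ContinuousAt g t) :
    Tendsto (fun h => ∫ s in (t - a)..(t + a), flatKernel h (s - t) * g s) (𝓝[>] 0)
      (𝓝 (π / 2 * g t)) := by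
  have hle : t - a ≤ t + a := by linarith
  have hshift (h : ℝ) : ∫ s in (t - a)..(t + a), flatKernel h (s - t)
      = ∫ u in -a..a, flatKernel h u := by
    rw [intervalIntegral.integral_comp_sub_right (flatKernel h)]
    congr 1 <;> ring
  have hmass : Tendsto
      (fun h => ∫ s in Set.Ioc (t - a) (t + a), 2 / π * flatKernel h (s - t)) (𝓝[>] 0) (𝓝 1) := by
    simp only [← intervalIntegral.integral_of_le hle, intervalIntegral.integral_const_mul, hshift]
    convert (tendsto_integral_flatKernel ha).const_mul (2 / π) using 2
    field_simp
  have hpeak := tendsto_setIntegral_peak_smul_of_integrableOn_of_tendsto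
    (μ := volume) (φ := fun h s => 2 / π * flatKernel h (s - t)) (l := 𝓝[>] (0 : ℝ)) (x₀ := t)
    measurableSet_Ioc measurableSet_Ioc subset_rfl self_mem_nhdsWithin measure_Ioc_lt_top.ne
    ?_ ?_ hmass ?_ hg.1 (hgt.tendsto.mono_left nhdsWithin_le_nhds)
  · convert hpeak.const_mul (π / 2) using 2 with h
    rw [intervalIntegral.integral_of_le hle, ← integral_const_mul]
    refine setIntegral_congr_fun measurableSet_Ioc fun s _ => ?_
    simp only [smul_eq_mul]
    field_simp
  · filter_upwards [self_mem_nhdsWithin] with h hh s _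
    exact mul_nonneg (by positivity) (flatKernel_nonneg (le_of_lt hh) _)
  · intro U hU ht
    have haway := (tendstoUniformlyOn_flatKernel_sub t (hU.mem_nhds ht)).mono
      (Set.sdiff_subset_compl (Set.Ioc (t - a) (t + a)) U)
    have hscaled := (uniformContinuous_const_smul (2 / π : ℝ)).comp_tendstoUniformlyOn haway
    simpa only [Function.comp_def, Pi.zero_def, smul_eq_mul, mul_zero] using hscaled
  · filter_upwards [self_mem_nhdsWithin] with h hh
    have := continuous_flatKernel (ne_of_gt hh)
    exact Continuous.aestronglyMeasurable (by fun_prop)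

lemma tendsto_integral_flatKernel_sub_mul_left {t a : ℝ} (ha : 0 < a) {g : ℝ → ℝ}
    (hg : IntervalIntegrable g volume (t - a) (t + a)) (hgt : ContinuousAt g t) :
    Tendsto (fun h => ∫ s in (t - a)..(t + a), flatKernel h (s - t) * g s) (𝓝[<] 0)
      (𝓝 (-(π / 2) * g t)) := by
  have hneg : Tendsto (fun h : ℝ => -h) (𝓝[<] 0) (𝓝[>] 0) := by
    simpa using tendsto_neg_nhdsLT (a := (0 : ℝ))
  have h := ((tendsto_integral_flatKernel_sub_mul ha hg hgt).comp hneg).neg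
  simpa only [Function.comp_def, flatKernel_neg_left, neg_mul, intervalIntegral.integral_neg,
    neg_neg] using h

end FlatKernel

section Dot

lemma dot2_self_eq_zero {v : ℝ × ℝ} : dot2 v v = 0 ↔ v = 0 := by
  rw [dot2, mul_self_add_mul_self_eq_zero, Prod.ext_iff, Prod.fst_zero, Prod.snd_zero]

lemma isBigO_dot2 {α : Type*} {l : Filter α} {f g : α → ℝ × ℝ} {φ ψ : α → ℝ} (hf : f =O[l] φ)
    (hg : g =O[l] ψ) : (fun x => dot2 (f x) (g x)) =O[l] fun x => φ x * ψ x :=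
  ((isBigO_fst_prod'.trans hf).mul (isBigO_fst_prod'.trans hg)).add
    ((isBigO_snd_prod'.trans hf).mul (isBigO_snd_prod'.trans hg))

lemma dot2_tang_mul_sub_dot2_nor_mul (γ : ℝ → ℝ × ℝ) (t : ℝ) (r : ℝ × ℝ) {s : ℝ}
    (hs : dot2 (deriv γ s) (deriv γ s) = 1) :
    (dot2 r (tang γ s) * dot2 (tang γ s) (nor γ t) - dot2 r (nor γ s) * dot2 (nor γ s) (nor γ t))
        * dot2 r r + dot2 r (nor γ t) * (dot2 r (nor γ s) ^ 2 - dot2 r (tang γ s) ^ 2)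
      = -2 * (dot2 r (tang γ s) * dot2 r (nor γ s) * dot2 r (tang γ t)) := by
  rw [← sub_eq_zero, ← one_mul (_ - _), ← hs]
  simp only [dot2, tang, nor]
  ring

lemma K22clamped_eq (γ : ℝ → ℝ × ℝ) (t : ℝ) (x : ℝ × ℝ) {s : ℝ}
    (hs : dot2 (deriv γ s) (deriv γ s) = 1) :
    K22clamped γ t x s = -(1 / π) * (dot2 (x - γ s) (tang γ s) * dot2 (x - γ s) (nor γ s)
      * dot2 (x - γ s) (tang γ t) / dot2 (x - γ s) (x - γ s) ^ 2) := by
  rcases eq_or_ne (x - γ s) 0 with hr | hr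
  · simp [K22clamped, hr, dot2]
  have hD : dot2 (x - γ s) (x - γ s) ≠ 0 := mt dot2_self_eq_zero.1 hr
  have hnum := dot2_tang_mul_sub_dot2_nor_mul γ t (x - γ s) hs
  unfold K22clamped
  field_simp
  linear_combination hnum

lemma continuousAt_K22clamped {γ : ℝ → ℝ × ℝ} (hγ : ContDiff ℝ 1 γ) (t : ℝ) {x : ℝ × ℝ} {s : ℝ}
    (hx : x ≠ γ s) : ContinuousAt (fun p : (ℝ × ℝ) × ℝ => K22clamped γ t p.1 p.2) (x, s) := by
  have hcont : Continuous γ := hγ.continuous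
  have _ : Continuous (deriv γ) := hγ.continuous_deriv le_rfl
  have hD : dot2 (x - γ s) (x - γ s) ≠ 0 := mt dot2_self_eq_zero.1 (sub_ne_zero.2 hx)
  unfold K22clamped
  refine .add (.div ?_ ?_ hD) (.div ?_ ?_ (pow_ne_zero 2 hD)) <;>
    (simp only [dot2, tang, nor]; fun_prop)

end Dot

section NormalOffset

/-- The vector `r = x - γ s` from the point `γ s` of the curve to the point `x = γ t + h • nor γ t`
on the normal line at `γ t`, as a function of `z = (h, s)`. -/
def normalOffset (γ : ℝ → ℝ × ℝ) (t : ℝ) (z : ℝ × ℝ) : ℝ × ℝ := γ t + z.1 • nor γ t - γ z.2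

variable {γ : ℝ → ℝ × ℝ} {t : ℝ}

lemma isBigO_fst_norm_sub (t : ℝ) :
    (fun z : ℝ × ℝ => z.1) =O[𝓝 (0, t)] fun z => ‖z - (0, t)‖ :=
  (isBigO_fst_prod' (f' := fun z : ℝ × ℝ => z - (0, t))).norm_right.congr_left
    fun z => sub_zero z.1

lemma isBigO_snd_sub_norm_sub (t : ℝ) :
    (fun z : ℝ × ℝ => z.2 - t) =O[𝓝 (0, t)] fun z => ‖z - (0, t)‖ :=
  (isBigO_snd_prod' (f' := fun z : ℝ × ℝ => z - (0, t))).norm_right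

lemma isBigO_comp_snd {E : Type*} [NormedAddCommGroup E] {f : ℝ → E} {n : ℕ}
    (hf : f =O[𝓝 t] fun s => (s - t) ^ n) :
    (fun z : ℝ × ℝ => f z.2) =O[𝓝 (0, t)] fun z => ‖z - (0, t)‖ ^ n :=
  (hf.comp_tendsto (continuousAt_snd (p := ((0 : ℝ), t)))).trans ((isBigO_snd_sub_norm_sub t).pow n)

lemma isBigO_sub_sub_smul_deriv {E : Type*} [NormedAddCommGroup E] [NormedSpace ℝ E] {f : ℝ → E}
    (hf : ContDiff ℝ 2 f) (t : ℝ) :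
    (fun s => f s - f t - (s - t) • deriv f t) =O[𝓝 t] fun s => (s - t) ^ 2 := by
  have htaylor := (taylor_isLittleO_univ (x₀ := t) (n := 2) (mod_cast hf)).isBigO
  have hquad : (fun s => ((1 + 1 : ℝ)⁻¹ * (s - t) ^ 2) • iteratedDeriv 2 f t) =O[𝓝 t]
      fun s => (s - t) ^ 2 := by
    simpa using ((isBigO_refl (fun s => (s - t) ^ 2) (𝓝 t)).const_mul_left (1 + 1 : ℝ)⁻¹).smul
      (isBigO_const_const (iteratedDeriv 2 f t) (one_ne_zero' ℝ) (𝓝 t))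
  refine (htaylor.add hquad).congr_left fun s => ?_
  simp only [taylorWithinEval_succ, taylor_within_zero_eval, iteratedDerivWithin_univ,
    iteratedDeriv_one, Nat.factorial_zero, Nat.factorial_one, CharP.cast_eq_zero, Nat.cast_one,
    zero_add, one_mul, mul_one, inv_one, pow_one, Nat.reduceAdd]
  abel

/-- The first-order part of `normalOffset`: the same vector when the curve is replaced by its
tangent line at `γ t`. -/
def tangentOffset (γ : ℝ → ℝ × ℝ) (t : ℝ) (z : ℝ × ℝ) : ℝ × ℝ :=
  z.1 • nor γ t - (z.2 - t) • tang γ t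

lemma isBigO_normalOffset_sub (hγ : ContDiff ℝ 2 γ) :
    (fun z => normalOffset γ t z - tangentOffset γ t z) =O[𝓝 (0, t)]
      fun z => ‖z - (0, t)‖ ^ 2 := by
  refine (isBigO_comp_snd (isBigO_sub_sub_smul_deriv hγ t)).neg_left.congr_left fun z => ?_
  simp only [normalOffset, tangentOffset, tang]
  abel

lemma isBigO_tangentOffset (γ : ℝ → ℝ × ℝ) (t : ℝ) :
    tangentOffset γ t =O[𝓝 (0, t)] fun z => ‖z - (0, t)‖ := by
  have hn := (isBigO_fst_norm_sub t).smul (isBigO_const_one ℝ (nor γ t) (𝓝 (0, t)))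
  have hτ := (isBigO_snd_sub_norm_sub t).smul (isBigO_const_one ℝ (tang γ t) (𝓝 (0, t)))
  exact (hn.sub hτ).congr_right fun z => mul_one _

lemma isBigO_norm_sub_sq (t : ℝ) :
    (fun z : ℝ × ℝ => ‖z - (0, t)‖ ^ 2) =O[𝓝 (0, t)] fun z => ‖z - (0, t)‖ := by
  simpa only [sq, mul_one] using (isBigO_refl (fun z : ℝ × ℝ => ‖z - (0, t)‖) _).mul
    ((tendsto_norm_sub_self ((0 : ℝ), t)).isBigO_one ℝ)

lemma isBigO_normalOffset (hγ : ContDiff ℝ 2 γ) :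
    normalOffset γ t =O[𝓝 (0, t)] fun z => ‖z - (0, t)‖ :=
  (((isBigO_normalOffset_sub hγ).trans (isBigO_norm_sub_sq t)).add
    (isBigO_tangentOffset γ t)).congr_left fun _ => sub_add_cancel _ _

lemma isBigO_tang_sub (hγ : ContDiff ℝ 2 γ) :
    (fun z : ℝ × ℝ => tang γ z.2 - tang γ t) =O[𝓝 (0, t)] fun z => ‖z - (0, t)‖ :=
  (hγ.differentiable_deriv_two t).isBigO_sub.comp_tendsto
    (continuousAt_snd (p := ((0 : ℝ), t))) |>.trans (isBigO_snd_sub_norm_sub t)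

lemma isBigO_nor_sub (hγ : ContDiff ℝ 2 γ) :
    (fun z : ℝ × ℝ => nor γ z.2 - nor γ t) =O[𝓝 (0, t)] fun z => ‖z - (0, t)‖ :=
  ((isBigO_snd_prod'.trans (isBigO_tang_sub hγ)).prod_left
    (isBigO_fst_prod'.trans (isBigO_tang_sub hγ)).neg_left).congr_left fun z => by
      ext <;> simp only [tang, nor, Prod.fst_sub, Prod.snd_sub]
      ring

lemma isBigO_dot2_tang_add (hγ : ContDiff ℝ 2 γ) (ht : dot2 (deriv γ t) (deriv γ t) = 1) :
    (fun z => dot2 (normalOffset γ t z) (tang γ t) + (z.2 - t)) =O[𝓝 (0, t)]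
      fun z => ‖z - (0, t)‖ ^ 2 := by
  refine (isBigO_dot2 (isBigO_normalOffset_sub hγ)
    (isBigO_const_one ℝ (tang γ t) (𝓝 (0, t)))).congr (fun z => ?_) fun z => mul_one _
  simp only [dot2, tangentOffset, tang, nor, Prod.fst_sub, Prod.snd_sub, Prod.smul_fst,
    Prod.smul_snd, smul_eq_mul] at ht ⊢
  linear_combination (z.2 - t) * ht

lemma isBigO_dot2_tang_snd_add (hγ : ContDiff ℝ 2 γ) (ht : dot2 (deriv γ t) (deriv γ t) = 1) :
    (fun z => dot2 (normalOffset γ t z) (tang γ z.2) + (z.2 - t)) =O[𝓝 (0, t)]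
      fun z => ‖z - (0, t)‖ ^ 2 := by
  refine ((isBigO_dot2_tang_add hγ ht).add ((isBigO_dot2 (isBigO_normalOffset hγ)
    (isBigO_tang_sub hγ)).congr_right fun z => (sq _).symm)).congr_left fun z => ?_
  simp only [dot2, Prod.fst_sub, Prod.snd_sub]
  ring

lemma isBigO_dot2_nor_snd_sub (hγ : ContDiff ℝ 2 γ) (ht : dot2 (deriv γ t) (deriv γ t) = 1) :
    (fun z => dot2 (normalOffset γ t z) (nor γ z.2) - z.1) =O[𝓝 (0, t)]
      fun z => ‖z - (0, t)‖ ^ 2 := by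
  have hfixed := (isBigO_dot2 (isBigO_normalOffset_sub hγ)
    (isBigO_const_one ℝ (nor γ t) (𝓝 (0, t)))).congr_right fun z => mul_one _
  have hrot := (isBigO_dot2 (isBigO_normalOffset hγ) (isBigO_nor_sub (t := t) hγ)).congr_right
    fun z => (sq _).symm
  refine (hfixed.add hrot).congr_left fun z => ?_
  simp only [dot2, tangentOffset, tang, nor, Prod.fst_sub, Prod.snd_sub, Prod.smul_fst,
    Prod.smul_snd, smul_eq_mul] at ht ⊢
  linear_combination -z.1 * ht

lemma isBigO_dot2_self_sub (hγ : ContDiff ℝ 2 γ) (ht : dot2 (deriv γ t) (deriv γ t) = 1) :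
    (fun z => dot2 (normalOffset γ t z) (normalOffset γ t z) - ((z.2 - t) ^ 2 + z.1 ^ 2))
      =O[𝓝 (0, t)] fun z => ‖z - (0, t)‖ ^ 3 := by
  refine (isBigO_dot2 (isBigO_normalOffset_sub hγ)
    ((isBigO_normalOffset hγ).add (isBigO_tangentOffset γ t))).congr (fun z => ?_) fun z => by ring
  simp only [dot2, tangentOffset, tang, nor, Prod.fst_sub, Prod.snd_sub, Prod.fst_add,
    Prod.snd_add, Prod.smul_fst, Prod.smul_snd, smul_eq_mul] at ht ⊢
  linear_combination -((z.2 - t) ^ 2 + z.1 ^ 2) * ht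

lemma isTheta_sq_add_sq (t : ℝ) :
    (fun z : ℝ × ℝ => (z.2 - t) ^ 2 + z.1 ^ 2) =Θ[𝓝 (0, t)] fun z => ‖z - (0, t)‖ ^ 2 := by
  refine ⟨((isBigO_snd_sub_norm_sub t).pow 2).add ((isBigO_fst_norm_sub t).pow 2), ?_⟩
  refine .of_bound' (.of_forall fun z => ?_)
  rw [norm_pow, norm_norm, Real.norm_of_nonneg (by positivity)]
  rcases max_choice ‖(z - (0, t)).1‖ ‖(z - (0, t)).2‖ with h | h
  · rw [Prod.norm_def, h, Real.norm_eq_abs, sq_abs, Prod.fst_sub, sub_zero]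
    exact le_add_of_nonneg_left (sq_nonneg _)
  · rw [Prod.norm_def, h, Real.norm_eq_abs, sq_abs, Prod.snd_sub]
    exact le_add_of_nonneg_right (sq_nonneg _)

lemma isTheta_dot2_self (hγ : ContDiff ℝ 2 γ) (ht : dot2 (deriv γ t) (deriv γ t) = 1) :
    (fun z => dot2 (normalOffset γ t z) (normalOffset γ t z)) =Θ[𝓝 (0, t)]
      fun z => (z.2 - t) ^ 2 + z.1 ^ 2 := by
  have hcube : (fun z : ℝ × ℝ => ‖z - (0, t)‖ ^ 3) =o[𝓝 (0, t)] fun z => ‖z - (0, t)‖ ^ 2 :=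
    (isLittleO_pow_pow (by norm_num)).comp_tendsto (tendsto_norm_sub_self ((0 : ℝ), t))
  exact IsEquivalent.isTheta <| ((isBigO_dot2_self_sub hγ ht).trans_isLittleO hcube).trans_isTheta
    (isTheta_sq_add_sq t).symm

end NormalOffset

section RegularPart

variable {γ : ℝ → ℝ × ℝ} {t : ℝ}

lemma isBigO_mul_dot2_sq_sub (hγ : ContDiff ℝ 2 γ) (ht : dot2 (deriv γ t) (deriv γ t) = 1) :
    (fun z => z.1 * (z.2 - t) ^ 2 * (dot2 (normalOffset γ t z) (normalOffset γ t z) ^ 2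
      - ((z.2 - t) ^ 2 + z.1 ^ 2) ^ 2)) =O[𝓝 (0, t)]
      fun z => (((z.2 - t) ^ 2 + z.1 ^ 2) ^ 2) ^ 2 := by
  have hq := isTheta_sq_add_sq t
  have hsum := ((isTheta_dot2_self hγ ht).isBigO.add (isBigO_refl _ _)).trans hq.isBigO
  have hprod := ((isBigO_fst_norm_sub t).mul ((isBigO_snd_sub_norm_sub t).pow 2)).mul
    ((isBigO_dot2_self_sub hγ ht).mul hsum)
  have hpow : (fun z : ℝ × ℝ => (‖z - (0, t)‖ ^ 2) ^ 4) =O[𝓝 (0, t)]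
      fun z => ((z.2 - t) ^ 2 + z.1 ^ 2) ^ 4 := (hq.pow 4).isBigO_symm
  exact ((hprod.congr_right fun z => by ring).trans hpow).congr (fun z => by ring)
    fun z => by ring

/-- The kernel along the normal line at `γ t`, as a function of `z = (h, s)`, minus its singular
part `-(1 / π) * flatKernel`. -/
def regularPart (γ : ℝ → ℝ × ℝ) (t : ℝ) (z : ℝ × ℝ) : ℝ :=
  K22clamped γ t (γ t + z.1 • nor γ t) z.2 + 1 / π * flatKernel z.1 (z.2 - t)

lemma regularPart_zero_left (γ : ℝ → ℝ × ℝ) (t s : ℝ) :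
    regularPart γ t (0, s) = K22clamped γ t (γ t) s := by
  simp [regularPart, flatKernel_zero_left]

lemma isBigO_one_regularPart (hγ : ContDiff ℝ 2 γ)
    (harc : ∀ s, dot2 (deriv γ s) (deriv γ s) = 1) :
    regularPart γ t =O[𝓝 (0, t)] fun _ => (1 : ℝ) := by
  have hD := isTheta_dot2_self hγ (harc t)
  have hnum := isBigO_mul_mul_sub (isBigO_snd_sub_norm_sub t) (isBigO_fst_norm_sub t)
    (tendsto_norm_sub_self _) (isBigO_dot2_tang_snd_add hγ (harc t))
    (isBigO_dot2_nor_snd_sub hγ (harc t)) (isBigO_dot2_tang_add hγ (harc t))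
  have hnum' := (hnum.congr_right fun z => by rw [← pow_mul]).trans
    ((isTheta_sq_add_sq t).pow 2).isBigO_symm
  have hquot := isBigO_one_div_sub_div (hD.pow 2) hnum' (isBigO_mul_dot2_sq_sub hγ (harc t))
  refine (hquot.const_mul_left (-(1 / π))).congr_left fun z => ?_
  rw [regularPart, K22clamped_eq _ _ _ (harc _), flatKernel]
  simp only [normalOffset]
  ring

lemma continuousAt_regularPart (hγ : ContDiff ℝ 1 γ) {h s : ℝ} (hs : s ≠ t)
    (hx : γ t + h • nor γ t ≠ γ s) : ContinuousAt (regularPart γ t) (h, s) := by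
  have hflat : ContinuousAt (fun z : ℝ × ℝ => flatKernel z.1 (z.2 - t)) (h, s) :=
    (continuousAt_flatKernel (z := (h, s - t)) (by simp [sub_eq_zero, hs])).comp
      (x := (h, s)) (f := fun z : ℝ × ℝ => (z.1, z.2 - t)) (by fun_prop)
  have hK : ContinuousAt (fun z : ℝ × ℝ => K22clamped γ t (γ t + z.1 • nor γ t) z.2) (h, s) :=
    (continuousAt_K22clamped hγ t hx).comp
      (x := (h, s)) (f := fun z : ℝ × ℝ => (γ t + z.1 • nor γ t, z.2)) (by fun_prop)
  exact hK.add (hflat.const_mul (1 / π))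

lemma eventually_normalOffset_ne_zero (hγ : ContDiff ℝ 2 γ)
    (ht : dot2 (deriv γ t) (deriv γ t) = 1) :
    ∀ᶠ z : ℝ × ℝ in 𝓝 (0, t), z.1 ≠ 0 → normalOffset γ t z ≠ 0 := by
  filter_upwards [(isTheta_dot2_self hγ ht).eq_zero_iff] with z hz h0 hoff
  have hpos : 0 < (z.2 - t) ^ 2 + z.1 ^ 2 := by positivity
  exact hpos.ne' (hz.1 (dot2_self_eq_zero.2 hoff))

end RegularPart

/-- A simple closed `C²` curve of length `L` in the plane, parametrized by arc length. -/
structure IsUnitSpeedClosedCurve (γ : ℝ → ℝ × ℝ) (L : ℝ) : Prop where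
  pos : 0 < L
  contDiff : ContDiff ℝ 2 γ
  periodic : Function.Periodic γ L
  injOn : Set.InjOn γ (Set.Ico 0 L)
  unit_speed : ∀ s, dot2 (deriv γ s) (deriv γ s) = 1

namespace IsUnitSpeedClosedCurve

variable {γ : ℝ → ℝ × ℝ} {L : ℝ} (hγ : IsUnitSpeedClosedCurve γ L) (t : ℝ)
include hγ

lemma ne_of_mem_Icc {s : ℝ} (hs : s ∈ Set.Icc (t - L / 2) (t + L / 2)) (hst : s ≠ t) :
    γ t ≠ γ s := by
  have hL := hγ.pos
  have hinj := injOn_Ico_of_periodic hγ.pos hγ.periodic (a := 0) (by simpa using hγ.injOn)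
  intro heq
  rcases le_total t s with h | h
  · exact hst (hinj t ⟨h, by linarith [hs.2]⟩ ⟨le_rfl, by linarith⟩ heq.symm)
  · exact hst (hinj s ⟨le_rfl, by linarith⟩ ⟨h, by linarith [hs.1]⟩ heq.symm)

lemma periodic_K22clamped (x : ℝ × ℝ) : Function.Periodic (K22clamped γ t x) L := by
  intro s
  simp only [K22clamped, tang, nor, hγ.periodic s, periodic_deriv_s16 hγ.periodic s]

lemma eventually_forall_normal_ne :
    ∀ᶠ h in 𝓝 (0 : ℝ), h ≠ 0 → ∀ s, γ t + h • nor γ t ≠ γ s := by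
  have hnear : ∀ᶠ h in 𝓝 (0 : ℝ), ∀ s ∈ Set.Icc (t - L / 2) (t + L / 2),
      h ≠ 0 → normalOffset γ t (h, s) ≠ 0 := by
    refine isCompact_Icc.eventually_forall_of_forall_eventually fun s hs => ?_
    rcases eq_or_ne s t with rfl | hst
    · exact eventually_normalOffset_ne_zero hγ.contDiff (hγ.unit_speed s)
    · have hcont : Continuous (normalOffset γ t) := by
        have _ := hγ.contDiff.continuous
        unfold normalOffset
        fun_prop
      have hne : normalOffset γ t (0, s) ≠ 0 := by
        simpa [normalOffset, sub_eq_zero] using hγ.ne_of_mem_Icc t hs hst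
      exact (hcont.continuousAt.eventually_ne hne).mono fun z hz _ => hz
  filter_upwards [hnear] with h hh h0 s
  obtain ⟨s', hs', heq⟩ := exists_mem_Icc_eq_of_periodic hγ.pos hγ.periodic t s
  exact heq ▸ sub_ne_zero.1 (hh s' hs' h0)

lemma exists_eventually_abs_regularPart_le :
    ∃ M, ∀ᶠ h in 𝓝 (0 : ℝ), ∀ s ∈ Set.Icc (t - L / 2) (t + L / 2),
      |regularPart γ t (h, s)| ≤ M := by
  refine exists_eventually_forall_norm_le_of_isBigO_one
    (f := regularPart γ t) isCompact_Icc fun s hs => ?_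
  rcases eq_or_ne s t with rfl | hst
  · exact isBigO_one_regularPart hγ.contDiff hγ.unit_speed
  · exact (continuousAt_regularPart (hγ.contDiff.of_le one_le_two) hst
      (by simpa using hγ.ne_of_mem_Icc t hs hst)).isBigO_one ℝ

lemma exists_abs_K22clamped_le : ∃ M, ∀ s, |K22clamped γ t (γ t) s| ≤ M := by
  obtain ⟨M, hM⟩ := hγ.exists_eventually_abs_regularPart_le t
  refine ⟨M, fun s => ?_⟩
  obtain ⟨s', hs', heq⟩ :=
    exists_mem_Icc_eq_of_periodic hγ.pos (hγ.periodic_K22clamped t (γ t)) t s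
  rw [heq, ← regularPart_zero_left]
  exact hM.self_of_nhds s' hs'

lemma eventually_continuous_regularPart :
    ∀ᶠ h in 𝓝[≠] (0 : ℝ), Continuous fun s => regularPart γ t (h, s) := by
  filter_upwards [(hγ.eventually_forall_normal_ne t).filter_mono nhdsWithin_le_nhds,
    self_mem_nhdsWithin] with h hne h0
  have hK : Continuous fun s => K22clamped γ t (γ t + h • nor γ t) s :=
    continuous_iff_continuousAt.2 fun s =>
      (continuousAt_K22clamped (hγ.contDiff.of_le one_le_two) t (hne h0 s)).comp
        (f := fun s => (γ t + h • nor γ t, s)) (by fun_prop)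
  have hflat : Continuous fun s => flatKernel h (s - t) :=
    (continuous_flatKernel h0).comp (continuous_sub_right t)
  exact hK.add (hflat.const_mul (1 / π))

variable {σ : ℝ → ℝ} (hσ : Continuous σ)
include hσ

lemma tendsto_integral_regularPart_mul :
    Tendsto (fun h => ∫ s in (t - L / 2)..(t + L / 2), regularPart γ t (h, s) * σ s) (𝓝[≠] 0)
      (𝓝 (∫ s in (t - L / 2)..(t + L / 2), K22clamped γ t (γ t) s * σ s)) := by
  obtain ⟨M, hM⟩ := hγ.exists_eventually_abs_regularPart_le t
  have hle : t - L / 2 ≤ t + L / 2 := by linarith [hγ.pos]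
  simp only [← regularPart_zero_left]
  refine intervalIntegral.tendsto_integral_filter_of_dominated_convergence (fun s => M * |σ s|)
    ?_ ?_ ((hσ.abs.const_mul M).intervalIntegrable _ _) ?_
  · filter_upwards [hγ.eventually_continuous_regularPart t] with h hreg
    exact (hreg.mul hσ).aestronglyMeasurable
  · filter_upwards [hM.filter_mono nhdsWithin_le_nhds] with h hh
    refine .of_forall fun s hs => ?_
    rw [Set.uIoc_of_le hle] at hs
    rw [norm_mul, Real.norm_eq_abs, Real.norm_eq_abs]
    gcongr
    exact hh s (Set.Ioc_subset_Icc_self hs)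
  · filter_upwards [Measure.ae_ne volume t] with s hst hs
    rw [Set.uIoc_of_le hle] at hs
    have hne := hγ.ne_of_mem_Icc t (Set.Ioc_subset_Icc_self hs) hst
    have hcont := continuousAt_regularPart (h := 0) (hγ.contDiff.of_le one_le_two) hst
      (by simpa using hne)
    have hslice : ContinuousAt (fun h : ℝ => regularPart γ t (h, s)) 0 :=
      hcont.comp (f := fun h : ℝ => (h, s)) (by fun_prop)
    exact (hslice.tendsto.mono_left nhdsWithin_le_nhds).mul_const (σ s)

lemma eventually_integral_K22clamped_mul (hσL : Function.Periodic σ L) :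
    ∀ᶠ h in 𝓝[≠] (0 : ℝ), ∫ s in (0 : ℝ)..L, K22clamped γ t (γ t + h • nor γ t) s * σ s
      = -(1 / π) * (∫ s in (t - L / 2)..(t + L / 2), flatKernel h (s - t) * σ s)
        + ∫ s in (t - L / 2)..(t + L / 2), regularPart γ t (h, s) * σ s := by
  filter_upwards [hγ.eventually_continuous_regularPart t, self_mem_nhdsWithin] with h hreg h0
  have hflat := continuous_flatKernel h0
  rw [integral_eq_integral_sub_half_add_half
      (f := fun s => K22clamped γ t (γ t + h • nor γ t) s * σ s)
      ((hγ.periodic_K22clamped t _).mul hσL) t,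
    ← intervalIntegral.integral_const_mul, ← intervalIntegral.integral_add]
  · refine intervalIntegral.integral_congr fun s _ => ?_
    simp only [regularPart]
    ring
  · exact Continuous.intervalIntegrable (by fun_prop) _ _
  · exact (hreg.mul hσ).intervalIntegrable _ _

lemma tendsto_integral_K22clamped_mul (hσL : Function.Periodic σ L) {l : Filter ℝ} {c : ℝ}
    (hl : l ≤ 𝓝[≠] 0)
    (hc : Tendsto (fun h => ∫ s in (t - L / 2)..(t + L / 2), flatKernel h (s - t) * σ s) l (𝓝 c)) :
    Tendsto (fun h => ∫ s in (0 : ℝ)..L, K22clamped γ t (γ t + h • nor γ t) s * σ s) l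
      (𝓝 (-(1 / π) * c + ∫ s in (0 : ℝ)..L, K22clamped γ t (γ t) s * σ s)) := by
  have hreg := (hγ.tendsto_integral_regularPart_mul t hσ).mono_left hl
  rw [← integral_eq_integral_sub_half_add_half
    (f := fun s => K22clamped γ t (γ t) s * σ s) ((hγ.periodic_K22clamped t _).mul hσL) t] at hreg
  refine ((hc.const_mul _).add hreg).congr' ?_
  filter_upwards [(hγ.eventually_integral_K22clamped_mul t hσ hσL).filter_mono hl] with h hh
  exact hh.symm

end IsUnitSpeedClosedCurve

theorem stmt16_general {L : ℝ} {γ : ℝ → ℝ × ℝ} (hγ : IsUnitSpeedClosedCurve γ L) {σ : ℝ → ℝ}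
    (hσ : Continuous σ) (hσL : Function.Periodic σ L) (t : ℝ) :
    ∃ h₀ > (0 : ℝ),
      (∀ h : ℝ, 0 < |h| → |h| < h₀ → ∀ s : ℝ, γ t + h • nor γ t ≠ γ s) ∧
      (∃ M : ℝ, ∀ s ∈ Set.Icc (0 : ℝ) L, |K22clamped γ t (γ t) s * σ s| ≤ M) ∧
      Tendsto
        (fun h : ℝ => ∫ s in (0 : ℝ)..L, K22clamped γ t (γ t + h • nor γ t) s * σ s)
        (𝓝[>] (0 : ℝ))
        (𝓝 (-(1 / 2) * σ t + ∫ s in (0 : ℝ)..L, K22clamped γ t (γ t) s * σ s)) ∧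
      Tendsto
        (fun h : ℝ => ∫ s in (0 : ℝ)..L, K22clamped γ t (γ t + h • nor γ t) s * σ s)
        (𝓝[<] (0 : ℝ))
        (𝓝 (1 / 2 * σ t + ∫ s in (0 : ℝ)..L, K22clamped γ t (γ t) s * σ s)) := by
  obtain ⟨h₀, hh₀, hne⟩ := Metric.eventually_nhds_iff.1 (hγ.eventually_forall_normal_ne t)
  obtain ⟨M, hM⟩ := hγ.exists_abs_K22clamped_le t
  obtain ⟨B, hB⟩ := isCompact_Icc.exists_bound_of_continuousOn (hσ.continuousOn (s := Set.Icc 0 L))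
  have hint : IntervalIntegrable σ volume (t - L / 2) (t + L / 2) := hσ.intervalIntegrable _ _
  refine ⟨h₀, hh₀, fun h hpos hlt => ?_, ⟨M * B, fun s hs => ?_⟩, ?_, ?_⟩
  · exact hne (by simpa using hlt) (abs_pos.1 hpos)
  · rw [abs_mul]
    exact mul_le_mul (hM s) (hB s hs) (abs_nonneg _) ((abs_nonneg _).trans (hM s))
  · convert hγ.tendsto_integral_K22clamped_mul t hσ hσL (nhdsGT_le_nhdsNE 0)
      (tendsto_integral_flatKernel_sub_mul (half_pos hγ.pos) hint hσ.continuousAt) using 3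
    field_simp
  · convert hγ.tendsto_integral_K22clamped_mul t hσ hσL (nhdsLT_le_nhdsNE 0)
      (tendsto_integral_flatKernel_sub_mul_left (half_pos hγ.pos) hint hσ.continuousAt) using 3
    field_simp

theorem stmt16 (L : ℝ) (hL : 0 < L) (γ : ℝ → ℝ × ℝ)
    (hγ : ContDiff ℝ (⊤ : ℕ∞) γ)
    (hper : ∀ s, γ (s + L) = γ s)
    (hinj : Set.InjOn γ (Set.Ico 0 L))
    (harc : ∀ s, dot2 (deriv γ s) (deriv γ s) = 1)
    (σ : ℝ → ℝ) (hσ : ContDiff ℝ (⊤ : ℕ∞) σ) (hσper : ∀ s, σ (s + L) = σ s)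
    (t : ℝ) :
    ∃ h₀ > (0 : ℝ),
      (∀ h : ℝ, 0 < |h| → |h| < h₀ → ∀ s : ℝ, γ t + h • nor γ t ≠ γ s) ∧
      (∃ M : ℝ, ∀ s ∈ Set.Icc (0 : ℝ) L, |K22clamped γ t (γ t) s * σ s| ≤ M) ∧
      Tendsto
        (fun h : ℝ => ∫ s in (0 : ℝ)..L, K22clamped γ t (γ t + h • nor γ t) s * σ s)
        (𝓝[>] (0 : ℝ))
        (𝓝 (-(1 / 2) * σ t + ∫ s in (0 : ℝ)..L, K22clamped γ t (γ t) s * σ s)) ∧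
      Tendsto
        (fun h : ℝ => ∫ s in (0 : ℝ)..L, K22clamped γ t (γ t + h • nor γ t) s * σ s)
        (𝓝[<] (0 : ℝ))
        (𝓝 (1 / 2 * σ t + ∫ s in (0 : ℝ)..L, K22clamped γ t (γ t) s * σ s)) := by
  exact stmt16_general ⟨hL, contDiff_infty.1 hγ 2, hper, hinj, harc⟩ hσ.continuous hσper t
end
end
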